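/- arXiv:2006.08930 — 4 statements merged into one kernel-verified Lean document; each statement's English description precedes it below -/
import Mathlib

section
/- For every z ∈ 𝔻 with |z| = r ≤ 2/(3 + |a_0| + √5·(1 + |a_0|)), the following inequality holds: |f(z)| + ∑_{n=1}^∞ |a_n| r^n + (1/(1+|a_0|) + r/(1-r)) · ∑_{n=1}^∞ |a_n|² r^{2n} ≤ 1. -/
/-!
Write `p = 1 + ∑ k ∈ s, t k * z ^ (N - k)`. The Cauchy estimate for the `N`-th coefficient of
`f * p ^ 2`, together with Parseval's identity for `p`, bounds a quadratic polynomial in the `t k`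
whose coefficients are Taylor coefficients of `f`. Taking each `t k` to be a multiple of
`conj (a k)` gives Carlson's inequalities
`|a (2 n + 1)| ≤ D n` and `|a (2 n + 2)| ≤ D n - |a (n + 1)| ^ 2 / (1 + |a 0|)`, where
`D n = 1 - ∑ k ≤ n, |a k| ^ 2`. Multiplied by powers of `r` and summed, these telescope to
`∑ n ≥ 1, |a n| r ^ n + (1 / (1 + |a 0|) + r / (1 - r)) * ∑ n ≥ 1, |a n| ^ 2 r ^ (2 n) ≤
(1 - |a 0| ^ 2) * r / (1 - r)`. The remaining term `|f z|` is at most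
`(|a 0| + r) / (1 + |a 0| r)` by Schwarz–Pick, and the radius condition gives
`(1 + |a 0|) r (1 + |a 0| r) ≤ (1 - r) ^ 2`, which makes the two bounds add up to at most `1`.
-/

open Finset Metric Topology

section CoefficientBounds

open Polynomial

theorem norm_coeff_mul_pow_le_circleAverage_norm {E : Type*} [NormedAddCommGroup E]
    [NormedSpace ℂ E] [CompleteSpace E] {g : ℂ → E} {c : ℕ → E} {w : ℂ} {R : ℝ} (hR : 0 < R)
    (hg : DiffContOnCl ℂ g (ball w R))
    (hc : ∀ᶠ z in 𝓝 0, HasSum (fun n ↦ z ^ n • c n) (g (w + z))) (n : ℕ) :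
    ‖c n‖ * R ^ n ≤ Real.circleAverage (fun z ↦ ‖g z‖) w R := by
  lift R to NNReal using hR.le
  have hseries : HasFPowerSeriesAt g
      (fun n ↦ ContinuousMultilinearMap.mkPiRing ℂ (Fin n) (c n)) w :=
    hasFPowerSeriesAt_iff.2 (by simpa [FormalMultilinearSeries.coeff] using hc)
  have huniq := hseries.eq_formalMultilinearSeries (hg.hasFPowerSeriesOnBall hR).hasFPowerSeriesAt
  have hbound := norm_cauchyPowerSeries_le g w R n
  rw [← huniq, ContinuousMultilinearMap.norm_mkPiRing, abs_of_pos hR, inv_pow,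
    ← div_eq_mul_inv, le_div_iff₀ (pow_pos hR n)] at hbound
  exact hbound

theorem hasSum_coeff_mul_mul_pow {𝕜 : Type*} [RCLike 𝕜] {F G : PowerSeries 𝕜} {z x y : 𝕜}
    (hF : HasSum (fun n ↦ F.coeff n * z ^ n) x) (hG : HasSum (fun n ↦ G.coeff n * z ^ n) y) :
    HasSum (fun n ↦ (F * G).coeff n * z ^ n) (x * y) := by
  have hprod := hasSum_sum_range_mul_of_summable_norm hF.summable.norm hG.summable.norm
  rw [hF.tsum_eq, hG.tsum_eq] at hprod
  refine hprod.congr_fun fun n ↦ ?_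
  rw [PowerSeries.coeff_mul, ← Nat.sum_antidiagonal_eq_sum_range_succ
    fun i j ↦ F.coeff i * z ^ i * (G.coeff j * z ^ j), sum_mul]
  refine sum_congr rfl fun ij hij ↦ ?_
  rw [← HasAntidiagonal.mem_antidiagonal.1 hij, pow_add]
  ring

theorem hasSum_coeff_coe_mul_pow {R : Type*} [Semiring R] [TopologicalSpace R]
    (p : R[X]) (z : R) :
    HasSum (fun n ↦ (p : PowerSeries R).coeff n * z ^ n) (p.eval z) := by
  rw [p.eval_eq_sum]
  simp only [Polynomial.coeff_coe]
  exact hasSum_sum_of_ne_finset_zero fun n hn ↦ by rw [notMem_support_iff.mp hn, zero_mul]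

theorem circleAverage_sq_norm_eval_le (p : ℂ[X]) {ρ : ℝ} (h0 : 0 ≤ ρ) (h1 : ρ ≤ 1) :
    Real.circleAverage (fun z ↦ ‖p.eval z‖ ^ 2) 0 ρ ≤ ∑ i ∈ p.support, ‖p.coeff i‖ ^ 2 := by
  have hparseval := (p.comp (C (ρ : ℂ) * X)).sum_sq_norm_coeff_eq_circleAverage
  have hscale : Real.circleAverage (fun z ↦ ‖p.eval z‖ ^ 2) 0 ρ =
      Real.circleAverage (fun z ↦ ‖(p.comp (C (ρ : ℂ) * X)).eval z‖ ^ 2) 0 1 := by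
    rw [Real.circleAverage_eq_circleAverage_zero_one]
    simp
  rw [hscale, ← hparseval]
  have hsub : (p.comp (C (ρ : ℂ) * X)).support ⊆ p.support := by
    intro i hi
    rw [mem_support_iff, comp_C_mul_X_coeff] at hi
    exact mem_support_iff.2 (left_ne_zero_of_mul hi)
  refine (sum_le_sum fun i _ ↦ ?_).trans
    (sum_le_sum_of_subset_of_nonneg hsub fun _ _ _ ↦ sq_nonneg _)
  rw [comp_C_mul_X_coeff, norm_mul, norm_pow, Complex.norm_of_nonneg h0]
  gcongr
  exact mul_le_of_le_one_right (norm_nonneg _) (pow_le_one₀ h0 h1)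

theorem coeff_mul_monomial_eq_ite {R : Type*} [Semiring R] (F : PowerSeries R) (N j : ℕ) (x : R) :
    (F * PowerSeries.monomial j x).coeff N = if j ≤ N then F.coeff (N - j) * x else 0 := by
  have hcoeff := MvPowerSeries.coeff_mul_monomial (Finsupp.single () N) (Finsupp.single () j) F x
  rwa [← Finsupp.single_tsub, if_congr Finsupp.single_le_single rfl rfl] at hcoeff

theorem coeff_mk_mul_one_add_sum_monomial_sq {R : Type*} [CommSemiring R] (a t : ℕ → R) {N : ℕ}
    {s : Finset ℕ} (hs : ∀ k ∈ s, k < N) :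
    (PowerSeries.mk a * (1 + ∑ k ∈ s, PowerSeries.monomial (N - k) (t k)) ^ 2).coeff N =
      a N + 2 * ∑ k ∈ s, a k * t k +
        ∑ kl ∈ s ×ˢ s with N ≤ kl.1 + kl.2, a (kl.1 + kl.2 - N) * (t kl.1 * t kl.2) := by
  set q : PowerSeries R := ∑ k ∈ s, PowerSeries.monomial (N - k) (t k) with hq
  have hexpand : PowerSeries.mk a * (1 + q) ^ 2 =
      PowerSeries.mk a + (PowerSeries.mk a * q + PowerSeries.mk a * q) +
        PowerSeries.mk a * q ^ 2 := by
    ring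
  have hlinear : (PowerSeries.mk a * q).coeff N = ∑ k ∈ s, a k * t k := by
    rw [hq, mul_sum, map_sum]
    refine sum_congr rfl fun k hk ↦ ?_
    rw [coeff_mul_monomial_eq_ite, if_pos (Nat.sub_le N k), PowerSeries.coeff_mk,
      Nat.sub_sub_self (hs k hk).le]
  have hsquare : (PowerSeries.mk a * q ^ 2).coeff N =
      ∑ kl ∈ s ×ˢ s with N ≤ kl.1 + kl.2, a (kl.1 + kl.2 - N) * (t kl.1 * t kl.2) := by
    rw [hq, sq, sum_mul_sum, ← sum_product', mul_sum, map_sum, sum_filter]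
    refine sum_congr rfl fun kl hkl ↦ ?_
    have hk := hs _ (mem_product.1 hkl).1
    have hl := hs _ (mem_product.1 hkl).2
    rw [PowerSeries.monomial_mul_monomial, coeff_mul_monomial_eq_ite, PowerSeries.coeff_mk]
    have hle : N - kl.1 + (N - kl.2) ≤ N ↔ N ≤ kl.1 + kl.2 := by omega
    have hsub : N - (N - kl.1 + (N - kl.2)) = kl.1 + kl.2 - N := by omega
    simp only [hle, hsub]
  rw [hexpand, map_add, map_add, map_add, hlinear, hsquare, PowerSeries.coeff_mk, two_mul]

theorem coeff_zero_one_add_sum_monomial {R : Type*} [Semiring R] (t : ℕ → R) {N : ℕ}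
    {s : Finset ℕ} (hs : ∀ k ∈ s, k < N) :
    (1 + ∑ k ∈ s, monomial (N - k) (t k)).coeff 0 = 1 := by
  simp only [coeff_add, coeff_one_zero, finsetSum_coeff, coeff_monomial]
  rw [sum_eq_zero fun k hk ↦ if_neg (Nat.sub_ne_zero_of_lt (hs k hk)), add_zero]

theorem coeff_sub_one_add_sum_monomial {R : Type*} [Semiring R] (t : ℕ → R) {N : ℕ}
    {s : Finset ℕ} (hs : ∀ k ∈ s, k < N) {k : ℕ} (hk : k ∈ s) :
    (1 + ∑ k ∈ s, monomial (N - k) (t k)).coeff (N - k) = t k := by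
  have hkN := hs k hk
  simp only [coeff_add, finsetSum_coeff, coeff_monomial]
  rw [coeff_one, if_neg (Nat.sub_ne_zero_of_lt hkN), zero_add, sum_eq_single_of_mem k hk,
    if_pos rfl]
  intro l hl hlk
  have hlN := hs l hl
  exact if_neg (by omega)

theorem support_one_add_sum_monomial_subset {R : Type*} [Semiring R] (t : ℕ → R) (N : ℕ)
    (s : Finset ℕ) :
    (1 + ∑ k ∈ s, monomial (N - k) (t k)).support ⊆ insert 0 (s.image (N - ·)) := by
  intro i hi
  by_contra hmem
  simp only [mem_insert, mem_image, not_or, not_exists, not_and] at hmem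
  refine mem_support_iff.1 hi ?_
  simp only [coeff_add, coeff_one, finsetSum_coeff, coeff_monomial]
  rw [if_neg hmem.1, zero_add]
  exact sum_eq_zero fun k hk ↦ if_neg (hmem.2 k hk)

theorem sum_sq_norm_coeff_one_add_sum_monomial_le {R : Type*} [NormedRing R] [NormOneClass R]
    (t : ℕ → R) {N : ℕ} {s : Finset ℕ} (hs : ∀ k ∈ s, k < N) :
    ∑ i ∈ (1 + ∑ k ∈ s, monomial (N - k) (t k)).support,
        ‖(1 + ∑ k ∈ s, monomial (N - k) (t k)).coeff i‖ ^ 2 ≤ 1 + ∑ k ∈ s, ‖t k‖ ^ 2 := by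
  have hinj : Set.InjOn (N - ·) (s : Set ℕ) := fun k hk l hl hkl ↦ by
    have hkN := hs k hk
    have hlN := hs l hl
    dsimp only at hkl
    omega
  have hnotMem : 0 ∉ s.image (N - ·) := by
    simpa only [mem_image, not_exists, not_and] using
      fun k hk ↦ Nat.sub_ne_zero_of_lt (hs k hk)
  refine (sum_le_sum_of_subset_of_nonneg (support_one_add_sum_monomial_subset t N s)
    fun _ _ _ ↦ sq_nonneg _).trans_eq ?_
  rw [sum_insert hnotMem, sum_image hinj, coeff_zero_one_add_sum_monomial t hs, norm_one, one_pow]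
  exact congrArg (1 + ·) (sum_congr rfl fun k hk ↦ by rw [coeff_sub_one_add_sum_monomial t hs hk])

variable {f : ℂ → ℂ} {a : ℕ → ℂ}

theorem norm_coeff_mk_mul_sq_le (hf : DifferentiableOn ℂ f (ball 0 1))
    (hb : ∀ z ∈ ball (0 : ℂ) 1, ‖f z‖ ≤ 1)
    (ha : ∀ᶠ z in 𝓝 0, HasSum (fun n ↦ a n * z ^ n) (f z)) (p : ℂ[X]) (N : ℕ) :
    ‖(PowerSeries.mk a * (p : PowerSeries ℂ) ^ 2).coeff N‖ ≤
      ∑ i ∈ p.support, ‖p.coeff i‖ ^ 2 := by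
  set c : ℕ → ℂ := fun n ↦ (PowerSeries.mk a * (p : PowerSeries ℂ) ^ 2).coeff n with hc
  have hseries : ∀ᶠ z in 𝓝 0, HasSum (fun n ↦ z ^ n • c n) (f (0 + z) * p.eval (0 + z) ^ 2) := by
    filter_upwards [ha] with z hz
    have hprod := hasSum_coeff_mul_mul_pow (F := PowerSeries.mk a)
      (by simpa only [PowerSeries.coeff_mk] using hz) (hasSum_coeff_coe_mul_pow (p ^ 2) z)
    simpa [hc, mul_comm] using hprod
  have hradius : ∀ ρ ∈ Set.Ioo (0 : ℝ) 1, ‖c N‖ * ρ ^ N ≤ ∑ i ∈ p.support, ‖p.coeff i‖ ^ 2 := by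
    rintro ρ ⟨h0, h1⟩
    have hball : closedBall (0 : ℂ) ρ ⊆ ball 0 1 := closedBall_subset_ball h1
    have hdiff : DifferentiableOn ℂ (fun z ↦ f z * p.eval z ^ 2) (closedBall 0 ρ) :=
      (hf.mono hball).mul (p.differentiable.pow 2).differentiableOn
    calc ‖c N‖ * ρ ^ N
        ≤ Real.circleAverage (fun z ↦ ‖f z * p.eval z ^ 2‖) 0 ρ :=
          norm_coeff_mul_pow_le_circleAverage_norm h0
            (hdiff.diffContOnCl_ball subset_rfl) hseries N
      _ ≤ Real.circleAverage (fun z ↦ ‖p.eval z‖ ^ 2) 0 ρ := by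
          refine Real.circleAverage_mono ?_ ?_ fun z hz ↦ ?_
          · rw [← abs_of_pos h0] at hdiff
            exact (hdiff.continuousOn.mono sphere_subset_closedBall).norm.circleIntegrable'
          · exact (p.continuous.norm.pow 2).continuousOn.circleIntegrable'
          · rw [abs_of_pos h0] at hz
            rw [norm_mul, norm_pow]
            exact mul_le_of_le_one_left (sq_nonneg _) (hb z (hball (sphere_subset_closedBall hz)))
      _ ≤ ∑ i ∈ p.support, ‖p.coeff i‖ ^ 2 := circleAverage_sq_norm_eval_le p h0.le h1.le
  have hlim : Filter.Tendsto (fun ρ : ℝ ↦ ‖c N‖ * ρ ^ N) (𝓝[<] 1) (𝓝 (‖c N‖ * 1 ^ N)) :=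
    (Continuous.tendsto (by fun_prop) 1).mono_left nhdsWithin_le_nhds
  simpa using le_of_tendsto hlim (Filter.mem_of_superset (Ioo_mem_nhdsLT zero_lt_one) hradius)

theorem norm_add_two_mul_sum_add_sum_le (hf : DifferentiableOn ℂ f (ball 0 1))
    (hb : ∀ z ∈ ball (0 : ℂ) 1, ‖f z‖ ≤ 1)
    (ha : ∀ᶠ z in 𝓝 0, HasSum (fun n ↦ a n * z ^ n) (f z)) {N : ℕ} {s : Finset ℕ}
    (hs : ∀ k ∈ s, k < N) (t : ℕ → ℂ) :
    ‖a N + 2 * ∑ k ∈ s, a k * t k +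
        ∑ kl ∈ s ×ˢ s with N ≤ kl.1 + kl.2, a (kl.1 + kl.2 - N) * (t kl.1 * t kl.2)‖ ≤
      1 + ∑ k ∈ s, ‖t k‖ ^ 2 := by
  have hbound := norm_coeff_mk_mul_sq_le hf hb ha (1 + ∑ k ∈ s, monomial (N - k) (t k)) N
  have hcast : ((1 + ∑ k ∈ s, monomial (N - k) (t k) : ℂ[X]) : PowerSeries ℂ) =
      1 + ∑ k ∈ s, PowerSeries.monomial (N - k) (t k) := by
    rw [Polynomial.coe_add, Polynomial.coe_one, ← coeToPowerSeries.ringHom_apply, map_sum]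
    simp only [coeToPowerSeries.ringHom_apply, coe_monomial]
  rw [hcast, coeff_mk_mul_one_add_sum_monomial_sq a t hs] at hbound
  exact hbound.trans (sum_sq_norm_coeff_one_add_sum_monomial_le t hs)

theorem norm_add_two_mul_weighted_sum_le (hf : DifferentiableOn ℂ f (ball 0 1))
    (hb : ∀ z ∈ ball (0 : ℂ) 1, ‖f z‖ ≤ 1)
    (ha : ∀ᶠ z in 𝓝 0, HasSum (fun n ↦ a n * z ^ n) (f z)) {N : ℕ} {s : Finset ℕ}
    (hs : ∀ k ∈ s, k < N) (w : ℕ → ℝ) :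
    ‖a N‖ + 2 * ∑ k ∈ s, w k * ‖a k‖ ^ 2 ≤
      1 + ∑ k ∈ s, (w k * ‖a k‖) ^ 2 + ∑ kl ∈ s ×ˢ s with N ≤ kl.1 + kl.2,
        ‖a (kl.1 + kl.2 - N)‖ * (|w kl.1| * ‖a kl.1‖ * (|w kl.2| * ‖a kl.2‖)) := by
  -- `u` carries the phase of `a N`, so that all terms of the linear part point along `u`.
  obtain ⟨u, hu, hau⟩ := RCLike.exists_norm_mul_eq_self (a N)
  set t : ℕ → ℂ := fun k ↦ u * (w k * starRingEnd ℂ (a k)) with ht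
  have hnorm : ∀ k, ‖t k‖ = |w k| * ‖a k‖ := fun k ↦ by simp [ht, hu]
  have hphase : a N + 2 * ∑ k ∈ s, a k * t k =
      u * ((‖a N‖ + 2 * ∑ k ∈ s, w k * ‖a k‖ ^ 2 : ℝ) : ℂ) := by
    simp only [ht, mul_left_comm _ u, mul_left_comm (a _), Complex.mul_conj', ← mul_sum]
    push_cast
    linear_combination -hau
  have hquad := norm_add_two_mul_sum_add_sum_le hf hb ha hs t
  have hcross := norm_sum_le ((s ×ˢ s).filter fun kl ↦ N ≤ kl.1 + kl.2)
    fun kl ↦ a (kl.1 + kl.2 - N) * (t kl.1 * t kl.2)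
  simp only [norm_mul, hnorm] at hcross
  simp only [hnorm, mul_pow, sq_abs] at hquad
  simp only [mul_pow]
  set B := ∑ kl ∈ s ×ˢ s with N ≤ kl.1 + kl.2, a (kl.1 + kl.2 - N) * (t kl.1 * t kl.2)
  calc ‖a N‖ + 2 * ∑ k ∈ s, w k * ‖a k‖ ^ 2
      ≤ ‖a N + 2 * ∑ k ∈ s, a k * t k‖ := by
        rw [hphase, norm_mul, hu, one_mul]
        exact (le_abs_self _).trans_eq (Complex.norm_real _).symm
    _ ≤ ‖a N + 2 * ∑ k ∈ s, a k * t k + B‖ + ‖B‖ := norm_le_add_norm_add _ _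
    _ ≤ _ := add_le_add hquad hcross

theorem norm_coeff_odd_le (hf : DifferentiableOn ℂ f (ball 0 1))
    (hb : ∀ z ∈ ball (0 : ℂ) 1, ‖f z‖ ≤ 1)
    (ha : ∀ᶠ z in 𝓝 0, HasSum (fun n ↦ a n * z ^ n) (f z)) (n : ℕ) :
    ‖a (2 * n + 1)‖ ≤ 1 - ∑ k ∈ range (n + 1), ‖a k‖ ^ 2 := by
  have hcross : (range (n + 1) ×ˢ range (n + 1)).filter
      (fun kl ↦ 2 * n + 1 ≤ kl.1 + kl.2) = ∅ := by
    ext ⟨k, l⟩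
    simp only [mem_filter, mem_product, mem_range, notMem_empty, iff_false]
    omega
  have hquad := norm_add_two_mul_weighted_sum_le hf hb ha (N := 2 * n + 1) (s := range (n + 1))
    (fun k hk ↦ by rw [mem_range] at hk; omega) fun _ ↦ 1
  rw [hcross, sum_empty] at hquad
  simp only [one_mul] at hquad
  linarith

theorem norm_coeff_even_le (hf : DifferentiableOn ℂ f (ball 0 1))
    (hb : ∀ z ∈ ball (0 : ℂ) 1, ‖f z‖ ≤ 1)
    (ha : ∀ᶠ z in 𝓝 0, HasSum (fun n ↦ a n * z ^ n) (f z)) (n : ℕ) :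
    ‖a (2 * n + 2)‖ ≤
      1 - ∑ k ∈ range (n + 1), ‖a k‖ ^ 2 - 1 / (1 + ‖a 0‖) * ‖a (n + 1)‖ ^ 2 := by
  -- This weight satisfies `2 * w - w ^ 2 - ‖a 0‖ * w ^ 2 = w`, which absorbs the one cross term.
  set w : ℝ := 1 / (1 + ‖a 0‖)
  have hcross : (range (n + 2) ×ˢ range (n + 2)).filter
      (fun kl ↦ 2 * n + 2 ≤ kl.1 + kl.2) = {(n + 1, n + 1)} := by
    ext ⟨k, l⟩
    simp only [mem_filter, mem_product, mem_range, mem_singleton, Prod.mk.injEq]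
    omega
  set v : ℕ → ℝ := Function.update 1 (n + 1) w
  have hv : v (n + 1) = w := Function.update_self ..
  have hv_low : ∀ k ∈ range (n + 1), v k = 1 := fun k hk ↦
    Function.update_of_ne (mem_range.1 hk).ne ..
  have hlinear : ∑ k ∈ range (n + 2), v k * ‖a k‖ ^ 2 =
      ∑ k ∈ range (n + 1), ‖a k‖ ^ 2 + w * ‖a (n + 1)‖ ^ 2 := by
    rw [sum_range_succ, hv]
    exact congrArg (· + _) (sum_congr rfl fun k hk ↦ by rw [hv_low k hk, one_mul])
  have hsquare : ∑ k ∈ range (n + 2), (v k * ‖a k‖) ^ 2 =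
      ∑ k ∈ range (n + 1), ‖a k‖ ^ 2 + (w * ‖a (n + 1)‖) ^ 2 := by
    rw [sum_range_succ, hv]
    exact congrArg (· + _) (sum_congr rfl fun k hk ↦ by rw [hv_low k hk, one_mul])
  have hquad := norm_add_two_mul_weighted_sum_le hf hb ha (N := 2 * n + 2) (s := range (n + 2))
    (fun k hk ↦ by rw [mem_range] at hk; omega) v
  have hw_mul : w * (1 + ‖a 0‖) = 1 := one_div_mul_cancel (by positivity)
  have hw_nonneg : 0 ≤ w := by positivity
  rw [hcross, sum_singleton, hlinear, hsquare, hv, abs_of_nonneg hw_nonneg,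
    show n + 1 + (n + 1) - (2 * n + 2) = 0 by omega] at hquad
  linear_combination hquad + w * ‖a (n + 1)‖ ^ 2 * hw_mul

end CoefficientBounds

section BohrSum

variable {b : ℕ → ℝ} {r u : ℝ}

theorem le_one_of_odd_le_one_sub_sum_sq (hb : ∀ n, 0 ≤ b n)
    (hodd : ∀ n, b (2 * n + 1) ≤ 1 - ∑ k ∈ range (n + 1), b k ^ 2) (n : ℕ) : b n ≤ 1 := by
  have hterm : b n ^ 2 ≤ ∑ k ∈ range (n + 1), b k ^ 2 :=
    single_le_sum (f := fun k ↦ b k ^ 2) (fun _ _ ↦ sq_nonneg _) (self_mem_range_succ n)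
  exact (sq_le_one_iff₀ (hb n)).1 (by linarith [hb (2 * n + 1), hodd n])

theorem sum_range_mul_pow_add_mul_sum_range_sq_le (hr0 : 0 ≤ r) (hr1 : r < 1)
    (hodd : ∀ n, b (2 * n + 1) ≤ 1 - ∑ k ∈ range (n + 1), b k ^ 2)
    (heven : ∀ n, b (2 * n + 2) ≤ 1 - ∑ k ∈ range (n + 1), b k ^ 2 - u * b (n + 1) ^ 2) (K : ℕ) :
    ∑ n ∈ range (2 * K), b (n + 1) * r ^ (n + 1) +
        (u + r / (1 - r)) * ∑ n ∈ range K, b (n + 1) ^ 2 * r ^ (2 * (n + 1)) ≤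
      (1 - b 0 ^ 2) * (r / (1 - r)) -
        (1 - ∑ k ∈ range (K + 1), b k ^ 2) * r ^ (2 * K) * (r / (1 - r)) := by
  set q := r / (1 - r) with hq
  have hgeom : q = r + r * q := by
    have := (sub_pos.2 hr1).ne'
    rw [hq]
    field_simp
    ring
  induction K with
  | zero => simp
  | succ K ih =>
    rw [show 2 * (K + 1) = 2 * K + 1 + 1 by ring, sum_range_succ _ (2 * K + 1),
      sum_range_succ _ (2 * K), sum_range_succ _ K, sum_range_succ _ (K + 1)]
    linear_combination ih + r ^ (2 * K + 1) * hodd K + r ^ (2 * K + 2) * heven K +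
      (1 + r) * r ^ (2 * K) * (∑ k ∈ range (K + 1), b k ^ 2 - 1) * hgeom

theorem tsum_mul_pow_add_mul_tsum_sq_le (hb : ∀ n, 0 ≤ b n) (hr0 : 0 ≤ r) (hr1 : r < 1)
    (hodd : ∀ n, b (2 * n + 1) ≤ 1 - ∑ k ∈ range (n + 1), b k ^ 2)
    (heven : ∀ n, b (2 * n + 2) ≤ 1 - ∑ k ∈ range (n + 1), b k ^ 2 - u * b (n + 1) ^ 2) :
    (∑' n, b (n + 1) * r ^ (n + 1)) +
        (u + r / (1 - r)) * ∑' n, b (n + 1) ^ 2 * r ^ (2 * (n + 1)) ≤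
      (1 - b 0 ^ 2) * (r / (1 - r)) := by
  have hb1 := le_one_of_odd_le_one_sub_sum_sq hb hodd
  have hgeom : Summable fun n ↦ r ^ (n + 1) :=
    (summable_nat_add_iff 1).2 (summable_geometric_of_lt_one hr0 hr1)
  have hsum : Summable fun n ↦ b (n + 1) * r ^ (n + 1) :=
    hgeom.of_nonneg_of_le (fun n ↦ mul_nonneg (hb _) (pow_nonneg hr0 _))
      fun n ↦ mul_le_of_le_one_left (pow_nonneg hr0 _) (hb1 _)
  have hsum_sq : Summable fun n ↦ b (n + 1) ^ 2 * r ^ (2 * (n + 1)) :=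
    hgeom.of_nonneg_of_le (fun n ↦ mul_nonneg (sq_nonneg _) (pow_nonneg hr0 _)) fun n ↦
      (mul_le_of_le_one_left (pow_nonneg hr0 _) (pow_le_one₀ (hb _) (hb1 _))).trans
        (pow_le_pow_of_le_one hr0 hr1.le (by omega))
  have hlim := hsum.hasSum.tendsto_sum_nat.comp
    (Filter.tendsto_id.const_mul_atTop' (zero_lt_two (α := ℕ)))
  refine le_of_tendsto' (hlim.add (hsum_sq.hasSum.tendsto_sum_nat.const_mul _)) fun K ↦
    (sum_range_mul_pow_add_mul_sum_range_sq_le hr0 hr1 hodd heven K).trans (sub_le_self _ ?_)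
  have hdefect : 0 ≤ 1 - ∑ k ∈ range (K + 1), b k ^ 2 := (hb _).trans (hodd K)
  have := sub_pos.2 hr1
  positivity

end BohrSum

section SchwarzPick

open ComplexConjugate

theorem norm_one_sub_conj_mul_sq {𝕜 : Type*} [RCLike 𝕜] (w u : 𝕜) :
    ‖1 - conj w * u‖ ^ 2 = ‖u - w‖ ^ 2 + (1 - ‖w‖ ^ 2) * (1 - ‖u‖ ^ 2) := by
  simp only [← RCLike.normSq_eq_def', RCLike.normSq_apply, map_sub, RCLike.mul_re, RCLike.mul_im,
    RCLike.conj_re, RCLike.conj_im, RCLike.one_re, RCLike.one_im]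
  ring

theorem norm_sub_le_norm_one_sub_conj_mul {𝕜 : Type*} [RCLike 𝕜] {w u : 𝕜} (hw : ‖w‖ ≤ 1)
    (hu : ‖u‖ ≤ 1) : ‖u - w‖ ≤ ‖1 - conj w * u‖ := by
  refine le_of_sq_le_sq ?_ (norm_nonneg _)
  rw [norm_one_sub_conj_mul_sq]
  exact le_add_of_nonneg_right (mul_nonneg (sub_nonneg.2 (pow_le_one₀ (norm_nonneg _) hw))
    (sub_nonneg.2 (pow_le_one₀ (norm_nonneg _) hu)))

theorem one_sub_conj_mul_ne_zero {𝕜 : Type*} [RCLike 𝕜] {w u : 𝕜} (hw : ‖w‖ < 1)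
    (hu : ‖u‖ ≤ 1) : 1 - conj w * u ≠ 0 := by
  refine sub_ne_zero.2 fun h ↦ ?_
  have hlt : ‖conj w * u‖ < 1 := by
    rw [norm_mul, RCLike.norm_conj]
    exact mul_lt_one_of_nonneg_of_lt_one_left (norm_nonneg _) hw hu
  rw [← h, norm_one] at hlt
  exact hlt.false

theorem norm_le_div_of_norm_sub_le {𝕜 : Type*} [RCLike 𝕜] {w u : 𝕜} {ρ : ℝ} (hρ0 : 0 ≤ ρ)
    (hρ1 : ρ ≤ 1) (hw : ‖w‖ ≤ 1) (hu : ‖u‖ ≤ 1) (h : ‖u - w‖ ≤ ρ * ‖1 - conj w * u‖) :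
    ‖u‖ ≤ (‖w‖ + ρ) / (1 + ‖w‖ * ρ) := by
  have hwu : ‖w‖ * ‖u‖ ≤ 1 := mul_le_one₀ hw (norm_nonneg _) hu
  suffices ‖u‖ - ‖w‖ ≤ ρ * (1 - ‖w‖ * ‖u‖) by
    rw [le_div_iff₀ (by positivity)]
    linarith
  rcases le_total ‖u‖ ‖w‖ with huw | hwu'
  · exact (sub_nonpos.2 huw).trans (mul_nonneg hρ0 (sub_nonneg.2 hwu))
  · have hsq : ‖u - w‖ ^ 2 ≤ ρ ^ 2 * ‖1 - conj w * u‖ ^ 2 := by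
      rw [← mul_pow]
      gcongr
    have htri : (‖u‖ - ‖w‖) ^ 2 ≤ ‖u - w‖ ^ 2 :=
      pow_le_pow_left₀ (sub_nonneg.2 hwu') (norm_sub_norm_le u w) 2
    rw [norm_one_sub_conj_mul_sq] at hsq
    refine le_of_sq_le_sq ?_ (mul_nonneg hρ0 (sub_nonneg.2 hwu))
    have hρ : 0 ≤ 1 - ρ ^ 2 := sub_nonneg.2 (pow_le_one₀ hρ0 hρ1)
    linear_combination hsq + (1 - ρ ^ 2) * htri

theorem norm_sub_le_mul_norm_one_sub_conj_mul {f : ℂ → ℂ}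
    (hf : DifferentiableOn ℂ f (ball 0 1)) (hb : ∀ z ∈ ball (0 : ℂ) 1, ‖f z‖ ≤ 1)
    (h0 : ‖f 0‖ < 1) {z : ℂ} (hz : z ∈ ball (0 : ℂ) 1) :
    ‖f z - f 0‖ ≤ ‖z‖ * ‖1 - conj (f 0) * f z‖ := by
  have hne : ∀ y ∈ ball (0 : ℂ) 1, 1 - conj (f 0) * f y ≠ 0 := fun y hy ↦
    one_sub_conj_mul_ne_zero h0 (hb y hy)
  have hmaps : Set.MapsTo (fun y ↦ (f y - f 0) / (1 - conj (f 0) * f y)) (ball 0 1)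
      (closedBall 0 1) := fun y hy ↦ by
    rw [mem_closedBall_zero_iff, norm_div]
    exact div_le_one_of_le₀ (norm_sub_le_norm_one_sub_conj_mul h0.le (hb y hy)) (norm_nonneg _)
  have hschwarz := Complex.norm_le_norm_of_mapsTo_ball
    ((hf.sub_const (f 0)).div ((hf.const_mul _).const_sub 1) hne) hmaps (by simp)
    (mem_ball_zero_iff.1 hz)
  rwa [Pi.div_apply, norm_div, div_le_iff₀ (norm_pos_iff.2 (hne z hz))] at hschwarz

theorem norm_le_div_of_norm_le_one_on_ball {f : ℂ → ℂ}
    (hf : DifferentiableOn ℂ f (ball 0 1)) (hb : ∀ z ∈ ball (0 : ℂ) 1, ‖f z‖ ≤ 1)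
    {z : ℂ} (hz : z ∈ ball (0 : ℂ) 1) : ‖f z‖ ≤ (‖f 0‖ + ‖z‖) / (1 + ‖f 0‖ * ‖z‖) := by
  have h0 := hb 0 (mem_ball_self one_pos)
  rcases h0.lt_or_eq with hlt | heq
  · exact norm_le_div_of_norm_sub_le (norm_nonneg z) (mem_ball_zero_iff.1 hz).le h0 (hb z hz)
      (norm_sub_le_mul_norm_one_sub_conj_mul hf hb hlt hz)
  · rw [heq, one_mul, div_self (by positivity)]
    exact hb z hz

end SchwarzPick

section Radius

variable {x r : ℝ}

theorem mul_le_sq_one_sub_of_le_two_div (hx : 0 ≤ x) (hr0 : 0 ≤ r)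
    (hr : r ≤ 2 / (3 + x + √5 * (1 + x))) : (1 + x) * r * (1 + x * r) ≤ (1 - r) ^ 2 := by
  rw [le_div_iff₀ (by positivity)] at hr
  have hconj : r * (3 + x - √5 * (1 + x)) ≤ r * (3 + x + √5 * (1 + x)) :=
    mul_le_mul_of_nonneg_left (by linarith [show 0 ≤ √5 * (1 + x) by positivity]) hr0
  -- The product of these two conjugate factors is `4 * ((1 - r) ^ 2 - (1 + x) * r * (1 + x * r))`.
  have hfactor := mul_nonneg (sub_nonneg.2 hr) (sub_nonneg.2 (hconj.trans hr))
  have hsqrt : √5 ^ 2 = (5 : ℝ) := Real.sq_sqrt (by norm_num)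
  linear_combination hfactor / 4 - r ^ 2 * (1 + x) ^ 2 / 4 * hsqrt

theorem div_add_mul_div_le_one (hx0 : 0 ≤ x) (hx1 : x ≤ 1) (hr0 : 0 ≤ r) (hr1 : r < 1)
    (h : (1 + x) * r * (1 + x * r) ≤ (1 - r) ^ 2) :
    (x + r) / (1 + x * r) + (1 - x ^ 2) * (r / (1 - r)) ≤ 1 := by
  have hr1' := sub_pos.2 hr1
  rw [← mul_div_assoc, div_add_div _ _ (by positivity) hr1'.ne', div_le_one₀ (by positivity)]
  linear_combination mul_le_mul_of_nonneg_left h (sub_nonneg.2 hx1)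

end Radius

/-- Theorem 2, first part: for a bounded analytic self-map `f` of the unit
disk and `|z| = r ≤ 2/(3 + |a₀| + √5(1 + |a₀|))`:
`|f(z)| + ∑_{n=1}^∞ |aₙ| rⁿ + (1/(1+|a₀|) + r/(1-r)) ∑_{n=1}^∞ |aₙ|² r^{2n} ≤ 1`. -/
theorem stmt3 (f : ℂ → ℂ) (a : ℕ → ℂ)
    (hf : DifferentiableOn ℂ f (Metric.ball 0 1))
    (hb : ∀ z ∈ Metric.ball (0 : ℂ) 1, ‖f z‖ ≤ 1)
    (hs : ∀ z ∈ Metric.ball (0 : ℂ) 1, HasSum (fun n => a n * z ^ n) (f z))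
    (z : ℂ) (hz : z ∈ Metric.ball (0 : ℂ) 1) (r : ℝ) (hzr : ‖z‖ = r)
    (hr : r ≤ 2 / (3 + ‖a 0‖ + Real.sqrt 5 * (1 + ‖a 0‖))) :
    ‖f z‖ + (∑' n : ℕ, ‖a (n + 1)‖ * r ^ (n + 1))
      + (1 / (1 + ‖a 0‖) + r / (1 - r))
        * ∑' n : ℕ, ‖a (n + 1)‖ ^ 2 * r ^ (2 * (n + 1))
      ≤ 1 := by
  have hf0 : f 0 = a 0 := by
    have hsingle := hasSum_single (f := fun n ↦ a n * (0 : ℂ) ^ n) 0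
      fun n hn ↦ by rw [zero_pow hn, mul_zero]
    simpa using (hs 0 (mem_ball_self one_pos)).unique hsingle
  have ha : ∀ᶠ z in 𝓝 0, HasSum (fun n ↦ a n * z ^ n) (f z) :=
    Filter.eventually_of_mem (ball_mem_nhds 0 one_pos) hs
  have hr0 : 0 ≤ r := hzr ▸ norm_nonneg z
  have hr1 : r < 1 := hzr ▸ mem_ball_zero_iff.1 hz
  have ha0 : ‖a 0‖ ≤ 1 := hf0 ▸ hb 0 (mem_ball_self one_pos)
  have hbohr := tsum_mul_pow_add_mul_tsum_sq_le (fun n ↦ norm_nonneg (a n)) hr0 hr1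
    (norm_coeff_odd_le hf hb ha) (norm_coeff_even_le hf hb ha)
  have hpick := norm_le_div_of_norm_le_one_on_ball hf hb hz
  rw [hf0, hzr] at hpick
  have hradius := div_add_mul_div_le_one (norm_nonneg (a 0)) ha0 hr0 hr1
    (mul_le_sq_one_sub_of_le_two_div (norm_nonneg (a 0)) hr0 hr)
  linarith
end

section
/- Let p be a positive integer, 0 ≤ m ≤ p an integer, and suppose f(z) = ∑_{n=0}^∞ a_{pn+m} z^{pn+m} on 𝔻. Suppose r ∈ [0,1) satisfies (1 - |a_m| - |a_m|²)·r^{p+m} + r^p + |a_m|·r^m - 1 ≤ 0. Then ∑_{n=0}^∞ |a_{pn+m}| r^{pn+m} + (1/(1+|a_m|) + r^p/(1-r^p)) · ∑_{n=1}^∞ |a_{pn+m}|² r^{2pn+m} ≤ 1. -/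
/-!
Dividing out `z ^ m` (by the maximum modulus principle) and passing to the variable `w = z ^ p`
leaves a function `g` bounded by `1` on the disc with coefficients `a 0, a 1, …`.

For such a `g` and any power series `u`, Cauchy's estimate for `g * u ^ 2` and Parseval's identity
for `u` give `|[w ^ n] (g * u ^ 2)| ≤ ∑ i ≤ n, |u i| ^ 2`. Taking `u = 1 + w ^ (n + 1) * v`, where
`v` contains the reversed conjugates of `a 0, …, a n` rotated by the phase of the top coefficient,
yields Carlson's inequalities
`|a (2n + 1)| ≤ 1 - ∑ k ≤ n, |a k| ^ 2` and
`|a (2n + 2)| ≤ 1 - ∑ k ≤ n, |a k| ^ 2 - |a (n + 1)| ^ 2 / (1 + |a 0|)`.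

Weighted by powers of `ρ = r ^ p`, these telescope to the bound
`|a 0| + (1 - |a 0| ^ 2) * ρ / (1 - ρ)`. The hypothesis on `r` says exactly that `r ^ m` times it is
at most `1`.
-/

open Filter Topology Metric PowerSeries
open scoped ComplexConjugate

/-- The power series `φ` converges on the open unit disc, with sum `g`. It lets the coefficients of
a function on the disc be manipulated in the ring `ℂ⟦X⟧`. -/
def HasDiscSum (φ : ℂ⟦X⟧) (g : ℂ → ℂ) : Prop :=
  ∀ z ∈ ball (0 : ℂ) 1, HasSum (fun n => coeff n φ * z ^ n) (g z)

namespace HasDiscSum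

variable {φ ψ : ℂ⟦X⟧} {g h : ℂ → ℂ}

lemma summable_norm (hφ : HasDiscSum φ g) {t : ℝ} (ht0 : 0 ≤ t) (ht1 : t < 1) :
    Summable fun n => ‖coeff n φ‖ * t ^ n := by
  have htb : (t : ℂ) ∈ ball (0 : ℂ) 1 := by simpa [abs_of_nonneg ht0] using ht1
  simpa [abs_of_nonneg ht0] using (hφ t htb).summable.norm

lemma hasFPowerSeriesOnBall (hφ : HasDiscSum φ g) :
    HasFPowerSeriesOnBall g (.ofScalars ℂ fun n => coeff n φ) 0 1 where
  r_le := by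
    refine ENNReal.le_of_forall_nnreal_lt fun t ht => ?_
    refine FormalMultilinearSeries.le_radius_of_summable _ ?_
    simpa only [FormalMultilinearSeries.ofScalars_norm] using
      hφ.summable_norm t.coe_nonneg (by exact_mod_cast ht)
  r_pos := one_pos
  hasSum {z} hz := by
    rw [← ENNReal.ofReal_one, eball_ofReal] at hz
    simpa [FormalMultilinearSeries.ofScalars_apply_eq, mul_comm] using hφ z hz

lemma differentiableOn (hφ : HasDiscSum φ g) : DifferentiableOn ℂ g (ball 0 1) := by
  have := hφ.hasFPowerSeriesOnBall.differentiableOn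
  rwa [← ENNReal.ofReal_one, eball_ofReal] at this

lemma polynomial (q : Polynomial ℂ) : HasDiscSum q fun z => q.eval z := by
  intro z _
  simp only [Polynomial.coeff_coe, Polynomial.eval_eq_sum, Polynomial.sum_def]
  exact hasSum_sum_of_ne_finset_zero fun n hn => by
    rw [Polynomial.notMem_support_iff.mp hn, zero_mul]

lemma mul (hφ : HasDiscSum φ g) (hψ : HasDiscSum ψ h) :
    HasDiscSum (φ * ψ) (g * h) := by
  intro z hz
  have hg := (hφ z hz).summable.norm
  have hh := (hψ z hz).summable.norm
  have hterm : (fun n => coeff n (φ * ψ) * z ^ n) = fun n =>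
      ∑ kl ∈ Finset.HasAntidiagonal.antidiagonal n,
        coeff kl.1 φ * z ^ kl.1 * (coeff kl.2 ψ * z ^ kl.2) := by
    funext n
    rw [coeff_mul, Finset.sum_mul]
    refine Finset.sum_congr rfl fun kl hkl => ?_
    rw [← Finset.HasAntidiagonal.mem_antidiagonal.mp hkl, pow_add]
    ring
  rw [hterm, Pi.mul_apply, ← (hφ z hz).tsum_eq, ← (hψ z hz).tsum_eq,
    tsum_mul_tsum_eq_tsum_sum_antidiagonal_of_summable_norm hg hh]
  exact (summable_norm_sum_mul_antidiagonal_of_summable_norm hg hh).of_norm.hasSum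

lemma norm_coeff_mul_pow_le_circleAverage (hφ : HasDiscSum φ g) (n : ℕ) {t : ℝ}
    (ht0 : 0 < t) (ht1 : t < 1) :
    ‖coeff n φ‖ * t ^ n ≤ Real.circleAverage (fun z => ‖g z‖) 0 t := by
  lift t to NNReal using ht0.le
  have hdiff : DifferentiableOn ℂ g (closedBall 0 t) :=
    hφ.differentiableOn.mono (closedBall_subset_ball ht1)
  have hseries : FormalMultilinearSeries.ofScalars ℂ (fun n => coeff n φ)
      = cauchyPowerSeries g 0 t :=
    hφ.hasFPowerSeriesOnBall.hasFPowerSeriesAt.eq_formalMultilinearSeries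
      (hdiff.hasFPowerSeriesOnBall ht0).hasFPowerSeriesAt
  have hcauchy := norm_cauchyPowerSeries_le g 0 t n
  rwa [← hseries, FormalMultilinearSeries.ofScalars_norm, abs_of_pos ht0, inv_pow,
    ← div_eq_mul_inv, le_div_iff₀ (pow_pos ht0 n)] at hcauchy

end HasDiscSum

lemma circleAverage_norm_eval_sq (q : Polynomial ℂ) (t : ℝ) :
    Real.circleAverage (fun z => ‖q.eval z‖ ^ 2) 0 t
      = ∑ i ∈ q.support, ‖q.coeff i‖ ^ 2 * t ^ (2 * i) := by
  have hcoeff (i : ℕ) :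
      ‖(q.comp (.C (t : ℂ) * .X)).coeff i‖ ^ 2 = ‖q.coeff i‖ ^ 2 * t ^ (2 * i) := by
    rw [Polynomial.comp_C_mul_X_coeff, norm_mul, norm_pow, mul_pow, Complex.norm_real,
      Real.norm_eq_abs, ← pow_mul, mul_comm i, pow_mul |t|, sq_abs, ← pow_mul]
  have hparseval := (q.comp (.C (t : ℂ) * .X)).sum_sq_norm_coeff_eq_circleAverage
  rw [Real.circleAverage_eq_circleAverage_zero_one]
  simp only [Polynomial.eval_comp, Polynomial.eval_mul, Polynomial.eval_C, Polynomial.eval_X,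
    hcoeff] at hparseval
  simp only [add_zero]
  rw [← hparseval]
  refine Finset.sum_subset (fun i hi => ?_) fun i _ hi => ?_
  · rw [Polynomial.mem_support_iff, Polynomial.comp_C_mul_X_coeff] at hi
    exact Polynomial.mem_support_iff.mpr (left_ne_zero_of_mul hi)
  · rw [← hcoeff, Polynomial.notMem_support_iff.mp hi, norm_zero, zero_pow two_ne_zero]

lemma circleAverage_norm_eval_trunc_sq_le (u : ℂ⟦X⟧) (n : ℕ) {t : ℝ} (ht0 : 0 ≤ t)
    (ht1 : t ≤ 1) :
    Real.circleAverage (fun z => ‖(trunc n u).eval z‖ ^ 2) 0 t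
      ≤ ∑ i ∈ Finset.range n, ‖coeff i u‖ ^ 2 := by
  have hsupport : (trunc n u).support ⊆ Finset.range n := fun i hi => by
    by_contra hin
    exact Polynomial.mem_support_iff.mp hi
      (by rw [coeff_trunc, if_neg (by simpa using hin)])
  rw [circleAverage_norm_eval_sq]
  refine (Finset.sum_le_sum_of_subset_of_nonneg hsupport fun i _ _ => by positivity).trans
    (Finset.sum_le_sum fun i hi => ?_)
  rw [coeff_trunc, if_pos (Finset.mem_range.mp hi)]
  exact mul_le_of_le_one_right (sq_nonneg _) (pow_le_one₀ ht0 ht1)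

/-- The coefficients `a₀, …, aₙ` of `φ`, conjugated and reversed: the test series whose product with
`φ` has `n`-th coefficient `∑ k ≤ n, |aₖ|²`. Only its coefficients of index at most `n` matter;
subtraction truncates, so all the later ones are `conj a₀`. -/
noncomputable def conjReflect (φ : ℂ⟦X⟧) (n : ℕ) : ℂ⟦X⟧ :=
  PowerSeries.mk fun j => conj (coeff (n - j) φ)

lemma coeff_mul_conjReflect (φ : ℂ⟦X⟧) (n : ℕ) :
    coeff n (φ * conjReflect φ n) = ((∑ k ∈ Finset.range (n + 1), ‖coeff k φ‖ ^ 2 : ℝ) : ℂ) := by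
  rw [coeff_mul, Finset.Nat.sum_antidiagonal_eq_sum_range_succ_mk]
  push_cast
  refine Finset.sum_congr rfl fun k hk => ?_
  rw [conjReflect, coeff_mk, Nat.sub_sub_self (Finset.mem_range_succ_iff.mp hk), Complex.mul_conj']

lemma sum_norm_coeff_conjReflect_sq (φ : ℂ⟦X⟧) (n : ℕ) :
    ∑ i ∈ Finset.range (n + 1), ‖coeff i (conjReflect φ n)‖ ^ 2
      = ∑ k ∈ Finset.range (n + 1), ‖coeff k φ‖ ^ 2 := by
  rw [← Finset.sum_range_reflect]
  refine Finset.sum_congr rfl fun k hk => ?_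
  rw [conjReflect, coeff_mk, RCLike.norm_conj, Nat.add_sub_cancel,
    Nat.sub_sub_self (Finset.mem_range_succ_iff.mp hk)]

lemma sum_norm_coeff_one_add_X_pow_mul_sq {R : Type*} [NormedRing R] [NormOneClass R] (v : R⟦X⟧)
    (n l : ℕ) :
    ∑ i ∈ Finset.range (n + 1 + l), ‖coeff i (1 + X ^ (n + 1) * v)‖ ^ 2
      = 1 + ∑ i ∈ Finset.range l, ‖coeff i v‖ ^ 2 := by
  have hlow : ∀ i ∈ Finset.range n, ‖coeff (i + 1) (1 + X ^ (n + 1) * v)‖ ^ 2 = 0 := by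
    intro i hi
    have hin : ¬n + 1 ≤ i + 1 := by simpa using hi
    simp [coeff_X_pow_mul', coeff_one, hin]
  rw [Finset.sum_range_add, Finset.sum_range_succ', Finset.sum_eq_zero hlow]
  simp [coeff_X_pow_mul', coeff_one]

lemma coeff_mul_one_add_X_pow_mul_sq {R : Type*} [CommRing R] (φ v : R⟦X⟧) (n k : ℕ) :
    coeff (n + 1 + k) (φ * (1 + X ^ (n + 1) * v) ^ 2) = coeff (n + 1 + k) φ
      + 2 * coeff k (φ * v) + if n + 1 ≤ k then coeff (k - (n + 1)) (φ * v ^ 2) else 0 := by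
  have hexpand : φ * (1 + X ^ (n + 1) * v) ^ 2 = φ + X ^ (n + 1) * (φ * v)
      + X ^ (n + 1) * (φ * v) + X ^ (n + 1) * (X ^ (n + 1) * (φ * v ^ 2)) := by ring
  rw [hexpand, map_add, map_add, map_add, coeff_X_pow_mul', coeff_X_pow_mul', coeff_X_pow_mul',
    if_pos (by lia), if_pos (by lia), Nat.add_sub_cancel_left]
  ring

namespace HasDiscSum

variable {φ : ℂ⟦X⟧} {g : ℂ → ℂ}

lemma norm_coeff_mul_sq_le (hφ : HasDiscSum φ g) (hg : ∀ z ∈ ball (0 : ℂ) 1, ‖g z‖ ≤ 1)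
    (u : ℂ⟦X⟧) (n : ℕ) :
    ‖coeff n (φ * u ^ 2)‖ ≤ ∑ i ∈ Finset.range (n + 1), ‖coeff i u‖ ^ 2 := by
  set q := trunc (n + 1) u
  have hprod : HasDiscSum (φ * ((q ^ 2 : Polynomial ℂ) : ℂ⟦X⟧)) (g * fun z => (q ^ 2).eval z) :=
    hφ.mul (.polynomial _)
  have hcoeff : coeff n (φ * u ^ 2) = coeff n (φ * ((q ^ 2 : Polynomial ℂ) : ℂ⟦X⟧)) := by
    rw [coeff_mul_eq_coeff_trunc_mul_trunc _ _ n.lt_succ_self, ← trunc_trunc_pow,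
      ← coeff_mul_eq_coeff_trunc_mul_trunc _ _ n.lt_succ_self, Polynomial.coe_pow]
  have hcircle (t : ℝ) (ht0 : 0 < t) (ht1 : t < 1) :
      ‖coeff n (φ * u ^ 2)‖ * t ^ n ≤ ∑ i ∈ Finset.range (n + 1), ‖coeff i u‖ ^ 2 := by
    rw [hcoeff]
    refine (hprod.norm_coeff_mul_pow_le_circleAverage n ht0 ht1).trans
      (le_trans ?_ (circleAverage_norm_eval_trunc_sq_le u (n + 1) ht0.le ht1.le))
    have hsphere : sphere (0 : ℂ) |t| ⊆ ball 0 1 := by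
      rw [abs_of_pos ht0]
      exact sphere_subset_ball ht1
    refine Real.circleAverage_mono ?_ ?_ fun z hz => ?_
    · exact (hprod.differentiableOn.continuousOn.norm.mono hsphere).circleIntegrable'
    · exact ContinuousOn.circleIntegrable' (by fun_prop)
    · rw [Pi.mul_apply, norm_mul, Polynomial.eval_pow, norm_pow]
      exact mul_le_of_le_one_left (sq_nonneg _) (hg z (hsphere hz))
  have hlim : Tendsto (fun t : ℝ => ‖coeff n (φ * u ^ 2)‖ * t ^ n) (𝓝[<] 1)
      (𝓝 (‖coeff n (φ * u ^ 2)‖ * 1 ^ n)) :=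
    (Continuous.tendsto (by fun_prop) 1).mono_left nhdsWithin_le_nhds
  rw [one_pow, mul_one] at hlim
  refine le_of_tendsto hlim ?_
  filter_upwards [Ioo_mem_nhdsLT one_pos] with t ht using hcircle t ht.1 ht.2

lemma norm_coeff_two_mul_add_one_add_le (hφ : HasDiscSum φ g)
    (hg : ∀ z ∈ ball (0 : ℂ) 1, ‖g z‖ ≤ 1) (n : ℕ) {ζ : ℂ} (hζ : ‖ζ‖ = 1) :
    ‖coeff (2 * n + 1) φ + 2 * (ζ * (∑ k ∈ Finset.range (n + 1), ‖coeff k φ‖ ^ 2 : ℝ))‖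
      ≤ 1 + ∑ k ∈ Finset.range (n + 1), ‖coeff k φ‖ ^ 2 := by
  have hbound :=
    hφ.norm_coeff_mul_sq_le hg (1 + X ^ (n + 1) * (C ζ * conjReflect φ n)) (n + 1 + n)
  rw [coeff_mul_one_add_X_pow_mul_sq, if_neg (by lia), add_zero, mul_left_comm, coeff_C_mul,
    coeff_mul_conjReflect, show n + 1 + n = 2 * n + 1 by ring,
    show 2 * n + 1 + 1 = n + 1 + (n + 1) by ring, sum_norm_coeff_one_add_X_pow_mul_sq] at hbound
  simpa only [coeff_C_mul, norm_mul, hζ, one_mul, sum_norm_coeff_conjReflect_sq] using hbound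

lemma norm_coeff_two_mul_succ_add_le (hφ : HasDiscSum φ g)
    (hg : ∀ z ∈ ball (0 : ℂ) 1, ‖g z‖ ≤ 1) (n : ℕ) {ζ : ℂ} (hζ : ‖ζ‖ = 1) (x : ℂ) :
    ‖coeff (2 * (n + 1)) φ
        + 2 * (x * coeff (n + 1) φ + ζ * (∑ k ∈ Finset.range (n + 1), ‖coeff k φ‖ ^ 2 : ℝ))
        + coeff 0 φ * x ^ 2‖
      ≤ 1 + (‖x‖ ^ 2 + ∑ k ∈ Finset.range (n + 1), ‖coeff k φ‖ ^ 2) := by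
  let v : ℂ⟦X⟧ := C x + X * (C ζ * conjReflect φ n)
  have hlinear : coeff (n + 1) (φ * v)
      = x * coeff (n + 1) φ + ζ * (∑ k ∈ Finset.range (n + 1), ‖coeff k φ‖ ^ 2 : ℝ) := by
    have hsplit : φ * v = C x * φ + X * (C ζ * (φ * conjReflect φ n)) := by ring
    rw [hsplit, map_add, coeff_C_mul, coeff_succ_X_mul, coeff_C_mul, coeff_mul_conjReflect]
  have hquadratic : coeff 0 (φ * v ^ 2) = coeff 0 φ * x ^ 2 := by
    simp [v]
  have hnorm : ∑ i ∈ Finset.range (n + 1 + 1), ‖coeff i v‖ ^ 2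
      = ‖x‖ ^ 2 + ∑ k ∈ Finset.range (n + 1), ‖coeff k φ‖ ^ 2 := by
    rw [Finset.sum_range_succ', add_comm (‖x‖ ^ 2)]
    simp [v, coeff_succ_X_mul, hζ, sum_norm_coeff_conjReflect_sq]
  have hbound := hφ.norm_coeff_mul_sq_le hg (1 + X ^ (n + 1) * v) (n + 1 + (n + 1))
  rwa [add_assoc (n + 1), sum_norm_coeff_one_add_X_pow_mul_sq, hnorm,
    coeff_mul_one_add_X_pow_mul_sq, if_pos le_rfl, Nat.sub_self, hlinear, hquadratic,
    ← two_mul] at hbound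

theorem norm_coeff_two_mul_add_one_le (hφ : HasDiscSum φ g)
    (hg : ∀ z ∈ ball (0 : ℂ) 1, ‖g z‖ ≤ 1) (n : ℕ) :
    ‖coeff (2 * n + 1) φ‖ ≤ 1 - ∑ k ∈ Finset.range (n + 1), ‖coeff k φ‖ ^ 2 := by
  obtain ⟨ζ, hζ, hζb⟩ := Complex.exists_norm_mul_eq_self (coeff (2 * n + 1) φ)
  have hbound := hφ.norm_coeff_two_mul_add_one_add_le hg n hζ
  set b := coeff (2 * n + 1) φ
  set Q := ∑ k ∈ Finset.range (n + 1), ‖coeff k φ‖ ^ 2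
  have haligned : b + 2 * (ζ * Q) = ζ * (‖b‖ + 2 * Q : ℝ) := by
    push_cast
    linear_combination -hζb
  rw [haligned, norm_mul, hζ, one_mul, Complex.norm_of_nonneg (by positivity)] at hbound
  linarith

theorem norm_coeff_two_mul_succ_le (hφ : HasDiscSum φ g)
    (hg : ∀ z ∈ ball (0 : ℂ) 1, ‖g z‖ ≤ 1) (n : ℕ) :
    ‖coeff (2 * (n + 1)) φ‖ ≤ 1 - ∑ k ∈ Finset.range (n + 1), ‖coeff k φ‖ ^ 2
      - ‖coeff (n + 1) φ‖ ^ 2 / (1 + ‖coeff 0 φ‖) := by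
  obtain ⟨ζ, hζ, hζb⟩ := Complex.exists_norm_mul_eq_self (coeff (2 * (n + 1)) φ)
  have hbound := hφ.norm_coeff_two_mul_succ_add_le hg n hζ
  set b := coeff (2 * (n + 1)) φ
  set c := coeff (n + 1) φ
  set A := ‖coeff 0 φ‖
  set Q := ∑ k ∈ Finset.range (n + 1), ‖coeff k φ‖ ^ 2
  -- The phase of `x` makes `x * c` a positive multiple of `ζ`; its modulus minimises
  -- `(1 + A) * ‖x‖ ^ 2 - 2 * ‖c‖ * ‖x‖`.
  let x : ℂ := ζ * conj c / (1 + A : ℝ)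
  have hx : ‖x‖ = ‖c‖ / (1 + A) := by
    rw [norm_div, norm_mul, hζ, one_mul, RCLike.norm_conj, Complex.norm_of_nonneg (by positivity)]
  have hxc : x * c = ζ * (‖c‖ ^ 2 / (1 + A) : ℝ) := by
    rw [Complex.ofReal_div, Complex.ofReal_pow, ← Complex.conj_mul']
    ring
  have haligned : b + 2 * (x * c + ζ * Q) = ζ * (‖b‖ + 2 * (‖c‖ ^ 2 / (1 + A) + Q) : ℝ) := by
    rw [hxc]
    push_cast
    linear_combination -hζb
  have haligned_norm : ‖b + 2 * (x * c + ζ * Q)‖ = ‖b‖ + 2 * (‖c‖ ^ 2 / (1 + A) + Q) := by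
    rw [haligned, norm_mul, hζ, one_mul, Complex.norm_of_nonneg (by positivity)]
  have hquadratic_norm : ‖coeff 0 φ * x ^ 2‖ = A * ‖x‖ ^ 2 := by rw [norm_mul, norm_pow]
  have hx_sq : (1 + A) * ‖x‖ ^ 2 = ‖c‖ ^ 2 / (1 + A) := by
    rw [hx]
    field_simp
  linarith [hbound x, norm_sub_le_norm_add (b + 2 * (x * c + ζ * Q)) (coeff 0 φ * x ^ 2)]

end HasDiscSum

lemma bohr_sum_range_le (x : ℕ → ℝ) {ρ : ℝ} (hρ0 : 0 ≤ ρ) (hρ1 : ρ ≠ 1)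
    (hodd : ∀ n, x (2 * n + 1) ≤ 1 - ∑ k ∈ Finset.range (n + 1), x k ^ 2)
    (heven : ∀ n, x (2 * (n + 1))
      ≤ 1 - ∑ k ∈ Finset.range (n + 1), x k ^ 2 - x (n + 1) ^ 2 / (1 + x 0)) (N : ℕ) :
    ∑ n ∈ Finset.range (2 * N), x (n + 1) * ρ ^ (n + 1)
        + (1 / (1 + x 0) + ρ / (1 - ρ)) * ∑ n ∈ Finset.range N, x (n + 1) ^ 2 * ρ ^ (2 * (n + 1))
      ≤ (1 - x 0 ^ 2) * (ρ / (1 - ρ))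
        - (1 - ∑ k ∈ Finset.range (N + 1), x k ^ 2) * (ρ ^ (2 * N + 1) / (1 - ρ)) := by
  induction N with
  | zero => simp
  | succ N ih =>
    have hρ : 1 - ρ ≠ 0 := sub_ne_zero.mpr hρ1.symm
    have hodd_term := mul_le_mul_of_nonneg_right (hodd N) (pow_nonneg hρ0 (2 * N + 1))
    have heven_term := mul_le_mul_of_nonneg_right (heven N) (pow_nonneg hρ0 (2 * (N + 1)))
    rw [div_eq_mul_one_div (x (N + 1) ^ 2)] at heven_term
    rw [Finset.sum_range_succ _ (N + 1), Finset.sum_range_succ _ N,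
      show 2 * (N + 1) = 2 * N + 1 + 1 by ring, Finset.sum_range_succ _ (2 * N + 1),
      Finset.sum_range_succ _ (2 * N), ← show 2 * (N + 1) = 2 * N + 1 + 1 by ring]
    set Q := ∑ k ∈ Finset.range (N + 1), x k ^ 2
    have htail : (1 - (Q + x (N + 1) ^ 2)) * (ρ ^ (2 * (N + 1) + 1) / (1 - ρ))
        = (1 - Q) * (ρ ^ (2 * N + 1) / (1 - ρ))
          - (1 - Q) * (ρ ^ (2 * N + 1) + ρ ^ (2 * (N + 1)))
          - ρ / (1 - ρ) * (x (N + 1) ^ 2 * ρ ^ (2 * (N + 1))) := by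
      field_simp
      ring
    rw [htail]
    linarith

lemma bohr_tsum_le (x : ℕ → ℝ) {ρ : ℝ} (hx : ∀ n, 0 ≤ x n) (hρ0 : 0 ≤ ρ) (hρ1 : ρ < 1)
    (hodd : ∀ n, x (2 * n + 1) ≤ 1 - ∑ k ∈ Finset.range (n + 1), x k ^ 2)
    (heven : ∀ n, x (2 * (n + 1))
      ≤ 1 - ∑ k ∈ Finset.range (n + 1), x k ^ 2 - x (n + 1) ^ 2 / (1 + x 0))
    (hsum : Summable fun n => x n * ρ ^ n) :
    ∑' n, x n * ρ ^ n
        + (1 / (1 + x 0) + ρ / (1 - ρ)) * ∑' n, x (n + 1) ^ 2 * ρ ^ (2 * (n + 1))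
      ≤ x 0 + (1 - x 0 ^ 2) * (ρ / (1 - ρ)) := by
  have hsum_tail : Summable fun n => x (n + 1) * ρ ^ (n + 1) := (summable_nat_add_iff 1).mpr hsum
  have hsum_sq : Summable fun n => x (n + 1) ^ 2 * ρ ^ (2 * (n + 1)) := by
    have hnonneg : 0 ≤ fun n => x (n + 1) * ρ ^ (n + 1) := fun n =>
      mul_nonneg (hx (n + 1)) (pow_nonneg hρ0 (n + 1))
    refine ((hsum_tail.mul_of_nonneg hsum_tail hnonneg hnonneg).comp_injective
      (i := fun n => (n, n)) fun _ _ h => congrArg Prod.fst h).congr fun n => ?_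
    simp only [Function.comp_apply]
    ring
  have hlim := (hsum_tail.hasSum.tendsto_sum_nat.comp
    (tendsto_id.const_mul_atTop' (zero_lt_two' ℕ))).add
    (hsum_sq.hasSum.tendsto_sum_nat.const_mul (1 / (1 + x 0) + ρ / (1 - ρ)))
  have hle : ∑' n, x (n + 1) * ρ ^ (n + 1)
        + (1 / (1 + x 0) + ρ / (1 - ρ)) * ∑' n, x (n + 1) ^ 2 * ρ ^ (2 * (n + 1))
      ≤ (1 - x 0 ^ 2) * (ρ / (1 - ρ)) := by
    refine le_of_tendsto' hlim fun N => (bohr_sum_range_le x hρ0 hρ1.ne hodd heven N).trans ?_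
    have hdeficit : 0 ≤ 1 - ∑ k ∈ Finset.range (N + 1), x k ^ 2 := (hx _).trans (hodd N)
    exact sub_le_self _
      (mul_nonneg hdeficit (div_nonneg (pow_nonneg hρ0 _) (sub_nonneg.mpr hρ1.le)))
  rw [hsum.tsum_eq_zero_add, pow_zero, mul_one]
  linarith

theorem HasDiscSum.tsum_norm_add_tsum_norm_sq_le {φ : ℂ⟦X⟧} {g : ℂ → ℂ} (hφ : HasDiscSum φ g)
    (hg : ∀ z ∈ ball (0 : ℂ) 1, ‖g z‖ ≤ 1) {ρ : ℝ} (hρ0 : 0 ≤ ρ) (hρ1 : ρ < 1) :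
    ∑' n, ‖coeff n φ‖ * ρ ^ n + (1 / (1 + ‖coeff 0 φ‖) + ρ / (1 - ρ))
        * ∑' n, ‖coeff (n + 1) φ‖ ^ 2 * ρ ^ (2 * (n + 1))
      ≤ ‖coeff 0 φ‖ + (1 - ‖coeff 0 φ‖ ^ 2) * (ρ / (1 - ρ)) :=
  bohr_tsum_le (fun n => ‖coeff n φ‖) (fun _ => norm_nonneg _) hρ0 hρ1
    (hφ.norm_coeff_two_mul_add_one_le hg) (hφ.norm_coeff_two_mul_succ_le hg)
    (hφ.summable_norm hρ0 hρ1)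

lemma norm_le_of_norm_pow_smul_le {E : Type*} [NormedAddCommGroup E] [NormedSpace ℂ E]
    {G : ℂ → E} {M : ℝ} {m : ℕ} (hG : DifferentiableOn ℂ G (ball 0 1))
    (hM : ∀ z ∈ ball (0 : ℂ) 1, ‖z ^ m • G z‖ ≤ M) {z : ℂ} (hz : z ∈ ball (0 : ℂ) 1) :
    ‖G z‖ ≤ M := by
  have hz1 : ‖z‖ < 1 := mem_ball_zero_iff.mp hz
  have hcircle (t : ℝ) (hzt : ‖z‖ < t) (ht1 : t < 1) : ‖G z‖ ≤ M / t ^ m := by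
    have ht0 : 0 < t := (norm_nonneg z).trans_lt hzt
    refine Complex.norm_le_of_forall_mem_frontier_norm_le isBounded_ball
      (hG.diffContOnCl_ball (closedBall_subset_ball ht1)) (fun w hw => ?_)
      (subset_closure (mem_ball_zero_iff.mpr hzt))
    have hwt : ‖w‖ = t := by simpa [frontier_ball _ ht0.ne'] using hw
    rw [le_div_iff₀' (pow_pos ht0 m)]
    simpa only [norm_smul, norm_pow, hwt] using hM w (mem_ball_zero_iff.mpr (hwt ▸ ht1))
  have hlim : Tendsto (fun t : ℝ => M / t ^ m) (𝓝[<] 1) (𝓝 (M / 1 ^ m)) :=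
    (ContinuousAt.tendsto (by fun_prop (disch := simp))).mono_left nhdsWithin_le_nhds
  rw [one_pow, div_one] at hlim
  refine ge_of_tendsto hlim ?_
  filter_upwards [Ioo_mem_nhdsLT hz1] with t ht using hcircle t ht.1 ht.2

lemma exists_hasDiscSum_norm_le {p m : ℕ} (hp : p ≠ 0) {f : ℂ → ℂ} {a : ℕ → ℂ} {M : ℝ}
    (hb : ∀ z ∈ ball (0 : ℂ) 1, ‖f z‖ ≤ M)
    (hs : ∀ z ∈ ball (0 : ℂ) 1, HasSum (fun n => a n * z ^ (p * n + m)) (f z)) :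
    ∃ g, HasDiscSum (.mk a) g ∧ ∀ w ∈ ball (0 : ℂ) 1, ‖g w‖ ≤ M := by
  have hroot (w : ℂ) (hw : w ∈ ball (0 : ℂ) 1) : ∃ z ∈ ball (0 : ℂ) 1, z ^ p = w := by
    obtain ⟨z, rfl⟩ := IsAlgClosed.exists_pow_nat_eq w (Nat.pos_of_ne_zero hp)
    rw [mem_ball_zero_iff, norm_pow] at hw
    exact ⟨z, mem_ball_zero_iff.mpr ((pow_lt_one_iff_of_nonneg (norm_nonneg z) hp).mp hw), rfl⟩
  have hterm (z : ℂ) (n : ℕ) : a n * z ^ (p * n + m) = z ^ m * (a n * (z ^ p) ^ n) := by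
    rw [pow_add, pow_mul]
    ring
  let g : ℂ → ℂ := fun w => ∑' n, a n * w ^ n
  have hg : HasDiscSum (.mk a) g := by
    intro w hw
    simp only [coeff_mk]
    refine Summable.hasSum ?_
    obtain ⟨z, hz, rfl⟩ := hroot w hw
    rcases eq_or_ne z 0 with rfl | hz0
    · refine summable_of_ne_finset_zero (s := {0}) fun n hn => ?_
      simp [hp, Finset.notMem_singleton.mp hn]
    · refine (summable_mul_left_iff (pow_ne_zero m hz0)).mp ?_
      simpa only [hterm] using (hs z hz).summable
  have hfg (z : ℂ) (hz : z ∈ ball (0 : ℂ) 1) : z ^ m • g (z ^ p) = f z := by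
    rw [smul_eq_mul, ← tsum_mul_left, ← (hs z hz).tsum_eq]
    simp only [hterm]
  have hmaps : Set.MapsTo (fun z : ℂ => z ^ p) (ball 0 1) (ball 0 1) := fun z hz => by
    rw [mem_ball_zero_iff] at hz ⊢
    rw [norm_pow]
    exact pow_lt_one₀ (norm_nonneg z) hz hp
  refine ⟨g, hg, fun w hw => ?_⟩
  obtain ⟨z, hz, rfl⟩ := hroot w hw
  exact norm_le_of_norm_pow_smul_le (G := fun z => g (z ^ p))
    (hg.differentiableOn.comp (by fun_prop) hmaps)
    (fun z hz => (congrArg norm (hfg z hz)).trans_le (hb z hz)) hz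

theorem stmt7_general (p m : ℕ) (hp : 0 < p) (f : ℂ → ℂ) (a : ℕ → ℂ)
    (hb : ∀ z ∈ Metric.ball (0 : ℂ) 1, ‖f z‖ ≤ 1)
    (hs : ∀ z ∈ Metric.ball (0 : ℂ) 1, HasSum (fun n => a n * z ^ (p * n + m)) (f z))
    (r : ℝ) (hr0 : 0 ≤ r) (hr1 : r < 1)
    (hcond : (1 - ‖a 0‖ - ‖a 0‖ ^ 2) * r ^ (p + m) + r ^ p + ‖a 0‖ * r ^ m - 1 ≤ 0) :
    (∑' n : ℕ, ‖a n‖ * r ^ (p * n + m))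
      + (1 / (1 + ‖a 0‖) + r ^ p / (1 - r ^ p))
        * ∑' n : ℕ, ‖a (n + 1)‖ ^ 2 * r ^ (2 * p * (n + 1) + m)
      ≤ 1 := by
  obtain ⟨g, hφ, hg⟩ := exists_hasDiscSum_norm_le hp.ne' hb hs
  have hρ1 : r ^ p < 1 := pow_lt_one₀ hr0 hr1 hp.ne'
  have hbohr := hφ.tsum_norm_add_tsum_norm_sq_le hg (pow_nonneg hr0 p) hρ1
  simp only [coeff_mk] at hbohr
  have hlinear (n : ℕ) : ‖a n‖ * r ^ (p * n + m) = r ^ m * (‖a n‖ * (r ^ p) ^ n) := by ring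
  have hsquare (n : ℕ) : ‖a (n + 1)‖ ^ 2 * r ^ (2 * p * (n + 1) + m)
      = r ^ m * (‖a (n + 1)‖ ^ 2 * (r ^ p) ^ (2 * (n + 1))) := by ring
  simp only [hlinear, hsquare, tsum_mul_left]
  have hthreshold : r ^ m * (‖a 0‖ + (1 - ‖a 0‖ ^ 2) * (r ^ p / (1 - r ^ p))) ≤ 1 := by
    have hpos : 0 < 1 - r ^ p := sub_pos.mpr hρ1
    have hdiv : r ^ m * (‖a 0‖ + (1 - ‖a 0‖ ^ 2) * (r ^ p / (1 - r ^ p)))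
        = r ^ m * (‖a 0‖ * (1 - r ^ p) + (1 - ‖a 0‖ ^ 2) * r ^ p) / (1 - r ^ p) := by
      field_simp
    rw [hdiv, div_le_one hpos]
    rw [pow_add] at hcond
    linarith
  linarith [mul_le_mul_of_nonneg_left hbohr (pow_nonneg hr0 m)]

/-- Theorem 3: let `f(z) = ∑_{n=0}^∞ a_{pn+m} z^{pn+m}` be a bounded analytic
self-map of the unit disk (here `a n` denotes the coefficient `a_{pn+m}`).
If `r ∈ [0,1)` satisfies `(1-|aₘ|-|aₘ|²)r^{p+m} + r^p + |aₘ|r^m - 1 ≤ 0`, then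
`∑_{n=0}^∞ |a_{pn+m}| r^{pn+m}
  + (1/(1+|aₘ|) + r^p/(1-r^p)) ∑_{n=1}^∞ |a_{pn+m}|² r^{2pn+m} ≤ 1`. -/
theorem stmt7 (p m : ℕ) (hp : 0 < p) (hm : m ≤ p) (f : ℂ → ℂ) (a : ℕ → ℂ)
    (hf : DifferentiableOn ℂ f (Metric.ball 0 1))
    (hb : ∀ z ∈ Metric.ball (0 : ℂ) 1, ‖f z‖ ≤ 1)
    (hs : ∀ z ∈ Metric.ball (0 : ℂ) 1, HasSum (fun n => a n * z ^ (p * n + m)) (f z))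
    (r : ℝ) (hr0 : 0 ≤ r) (hr1 : r < 1)
    (hcond : (1 - ‖a 0‖ - ‖a 0‖ ^ 2) * r ^ (p + m) + r ^ p + ‖a 0‖ * r ^ m - 1 ≤ 0) :
    (∑' n : ℕ, ‖a n‖ * r ^ (p * n + m))
      + (1 / (1 + ‖a 0‖) + r ^ p / (1 - r ^ p))
        * ∑' n : ℕ, ‖a (n + 1)‖ ^ 2 * r ^ (2 * p * (n + 1) + m)
      ≤ 1 :=
  stmt7_general p m hp f a hb hs r hr0 hr1 hcond
end

section
/- Let p be a positive integer and suppose f(z) = ∑_{n=0}^∞ a_{pn} z^{pn} on 𝔻. Then for every r with 0 ≤ r ≤ (1/2)^{1/p}: |a_0|² + ∑_{n=1}^∞ |a_{pn}| r^{pn} + (1/(1+|a_0|) + r^p/(1-r^p)) · ∑_{n=1}^∞ |a_{pn}|² r^{2pn} ≤ 1. -/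
/-!
If `|f| ≤ 1` on the disk, multiplication by its boundary function is a contraction of `L²` of
the circle, so the lower triangular Toeplitz matrix of the Taylor coefficients is a contraction.
Testing it on a vector adapted to the coefficients gives Carlson's inequality
`‖a (2n)‖ + ∑ k < n, ‖a k‖² + ‖a n‖² / (1 + ‖a 0‖) ≤ 1` for `n ≥ 1`; applied to `z f(z)` it also
controls the odd coefficients. Multiplying these bounds by powers of `x = r ^ p` and adding them up,
the terms `∑ k < n, ‖a k‖²` telescope to the Bohr type inequality with right-hand side
`(1 - ‖a 0‖²) x / (1 - x)`, which is at most `1 - ‖a 0‖²` for `x ≤ 1 / 2`.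
-/

open Finset Filter Topology AddCircle

section Fourier

variable {T : ℝ}

theorem hasSum_powerSeries_toCircle {b : ℕ → ℂ} {F : C(AddCircle T, ℂ)}
    (hF : HasSum (fun n : ℕ => b n • fourier (n : ℤ)) F) (x : AddCircle T) :
    HasSum (fun n => b n * (toCircle x : ℂ) ^ n) (F x) := by
  simpa [fourier_apply, toCircle_nsmul] using hF.mapL (ContinuousMap.evalCLM ℂ x)

variable [Fact (0 < T)]

theorem inner_fourierLp_toLp (F : C(AddCircle T, ℂ)) (n : ℤ) :
    inner ℂ (fourierLp 2 n) (F.toLp 2 haarAddCircle ℂ) = fourierCoeff F n := by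
  rw [← coe_fourierBasis, ← HilbertBasis.repr_apply_apply, fourierBasis_repr, fourierCoeff_toLp]

theorem fourierCoeff_eq_of_hasSum {c : ℤ → ℂ} {F : C(AddCircle T, ℂ)}
    (h : HasSum (fun n => c n • fourier n) F) : fourierCoeff F = c := by
  ext m
  let coeff : C(AddCircle T, ℂ) →L[ℂ] ℂ :=
    (innerSL ℂ (fourierLp 2 m)).comp (ContinuousMap.toLp 2 haarAddCircle ℂ)
  have hcoeff (G : C(AddCircle T, ℂ)) : coeff G = fourierCoeff G m := inner_fourierLp_toLp G m
  have hsum := h.mapL coeff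
  simp only [hcoeff, ContinuousMap.coe_smul, fourierCoeff.const_smul, fourierCoeff_fourier,
    smul_eq_mul] at hsum
  refine hsum.unique ?_
  convert hasSum_single m fun n hn => ?_ using 1
  · simp
  · simp [hn]

theorem fourierCoeff_natCast_sub_of_hasSum {b : ℕ → ℂ} {F : C(AddCircle T, ℂ)}
    (hF : HasSum (fun n : ℕ => b n • fourier (n : ℤ)) F) (j k : ℕ) :
    fourierCoeff F (k - j) = if j ≤ k then b (k - j) else 0 := by
  have hF' : HasSum (fun n : ℤ => Function.extend (Nat.cast : ℕ → ℤ) b 0 n • fourier n) F := by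
    rw [← Function.Injective.hasSum_iff Nat.cast_injective]
    · simpa [Function.comp_def, Nat.cast_injective.extend_apply] using hF
    · intro n hn
      rw [Function.extend_apply' _ _ _ hn]
      exact zero_smul ℂ (fourier n : C(AddCircle T, ℂ))
  rw [fourierCoeff_eq_of_hasSum hF']
  split_ifs with hjk
  · rw [← Nat.cast_sub hjk, Nat.cast_injective.extend_apply]
  · refine Function.extend_apply' _ _ _ ?_
    rintro ⟨n, hn⟩
    omega

theorem fourierCoeff_mul_fourier (F : AddCircle T → ℂ) (j k : ℤ) :
    fourierCoeff (fun x => F x * fourier j x) k = fourierCoeff F (k - j) := by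
  refine MeasureTheory.integral_congr_ae (.of_forall fun x => ?_)
  simp only [smul_eq_mul, sub_eq_add_neg, neg_add, neg_neg, fourier_add]
  ring

theorem fourierCoeff_mul_trigPoly (F : C(AddCircle T, ℂ)) (t : Finset ℤ) (u : ℤ → ℂ) (k : ℤ) :
    fourierCoeff (F * ∑ j ∈ t, u j • fourier j : C(AddCircle T, ℂ)) k =
      ∑ j ∈ t, u j * fourierCoeff F (k - j) := by
  simp only [← inner_fourierLp_toLp, mul_sum, mul_smul_comm, map_sum, map_smul, inner_sum,
    inner_smul_right]
  refine sum_congr rfl fun j _ => ?_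
  rw [inner_fourierLp_toLp, inner_fourierLp_toLp, ← fourierCoeff_mul_fourier]
  rfl

theorem norm_toLp_mul_le (F G : C(AddCircle T, ℂ)) :
    ‖(F * G).toLp 2 haarAddCircle ℂ‖ ≤ ‖F‖ * ‖G.toLp 2 haarAddCircle ℂ‖ := by
  refine MeasureTheory.Lp.norm_le_mul_norm_of_ae_le_mul ?_
  filter_upwards [ContinuousMap.coeFn_toLp (p := 2) (𝕜 := ℂ) haarAddCircle (F * G),
    ContinuousMap.coeFn_toLp (p := 2) (𝕜 := ℂ) haarAddCircle G] with x hFG hG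
  rw [hFG, hG, ContinuousMap.mul_apply, norm_mul]
  gcongr
  exact F.norm_coe_le_norm x

theorem norm_toLp_trigPoly_sq (t : Finset ℤ) (u : ℤ → ℂ) :
    ‖(∑ j ∈ t, u j • fourier j : C(AddCircle T, ℂ)).toLp 2 haarAddCircle ℂ‖ ^ 2 =
      ∑ j ∈ t, ‖u j‖ ^ 2 := by
  have hinner := (orthonormal_fourier (T := T)).inner_sum u u t
  rw [inner_self_eq_norm_sq_to_K] at hinner
  simp only [Complex.conj_mul'] at hinner
  simp only [map_sum, map_smul]
  exact Complex.ofReal_injective (by push_cast; exact hinner)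

theorem sum_sq_norm_toeplitz_fourierCoeff_le (F : C(AddCircle T, ℂ)) (s t : Finset ℤ)
    (u : ℤ → ℂ) :
    ∑ k ∈ s, ‖∑ j ∈ t, u j * fourierCoeff F (k - j)‖ ^ 2 ≤ ‖F‖ ^ 2 * ∑ j ∈ t, ‖u j‖ ^ 2 := by
  set U : C(AddCircle T, ℂ) := ∑ j ∈ t, u j • fourier j with hU
  calc ∑ k ∈ s, ‖∑ j ∈ t, u j * fourierCoeff F (k - j)‖ ^ 2
      = ∑ k ∈ s, ‖inner ℂ (fourierLp 2 k) ((F * U).toLp 2 haarAddCircle ℂ)‖ ^ 2 := by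
        simp only [inner_fourierLp_toLp, hU, fourierCoeff_mul_trigPoly]
    _ ≤ ‖(F * U).toLp 2 haarAddCircle ℂ‖ ^ 2 :=
        orthonormal_fourier.sum_inner_products_le _
    _ ≤ (‖F‖ * ‖U.toLp 2 haarAddCircle ℂ‖) ^ 2 := by
        gcongr
        exact norm_toLp_mul_le F U
    _ = ‖F‖ ^ 2 * ∑ j ∈ t, ‖u j‖ ^ 2 := by rw [mul_pow, norm_toLp_trigPoly_sq]

end Fourier

theorem sum_sq_norm_toeplitz_le_of_unit_circle {b : ℕ → ℂ} (hb : Summable fun n => ‖b n‖) {M : ℝ}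
    (hM : ∀ z : ℂ, ‖z‖ = 1 → ‖∑' n, b n * z ^ n‖ ≤ M) (s t : Finset ℕ) (u : ℕ → ℂ) :
    ∑ k ∈ s, ‖∑ j ∈ t with j ≤ k, b (k - j) * u j‖ ^ 2 ≤ M ^ 2 * ∑ j ∈ t, ‖u j‖ ^ 2 := by
  have hsummable : Summable fun n : ℕ => b n • (fourier (n : ℤ) : C(UnitAddCircle, ℂ)) :=
    .of_norm (by simpa [norm_smul, fourier_norm] using hb)
  obtain ⟨F, hF⟩ := hsummable
  have hFM : ‖F‖ ≤ M := (ContinuousMap.norm_le_of_nonempty F).mpr fun x => by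
    rw [← (hasSum_powerSeries_toCircle hF x).tsum_eq]
    exact hM _ (Circle.norm_coe _)
  have htoeplitz := sum_sq_norm_toeplitz_fourierCoeff_le F (s.map Nat.castEmbedding)
    (t.map Nat.castEmbedding) (fun j => u j.toNat)
  simp only [sum_map, Nat.castEmbedding_apply, Int.toNat_natCast,
    fourierCoeff_natCast_sub_of_hasSum hF] at htoeplitz
  calc ∑ k ∈ s, ‖∑ j ∈ t with j ≤ k, b (k - j) * u j‖ ^ 2
      = ∑ k ∈ s, ‖∑ j ∈ t, u j * if j ≤ k then b (k - j) else 0‖ ^ 2 := by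
        simp only [sum_filter, mul_ite, mul_zero, mul_comm]
    _ ≤ ‖F‖ ^ 2 * ∑ j ∈ t, ‖u j‖ ^ 2 := htoeplitz
    _ ≤ M ^ 2 * ∑ j ∈ t, ‖u j‖ ^ 2 := by gcongr

theorem sum_insert_zero_Icc_two_mul {M : Type*} [AddCommMonoid M] {n : ℕ} (hn : 0 < n)
    (g : ℕ → M) :
    ∑ j ∈ insert 0 (Icc n (2 * n)), g j = g 0 + (g n + ∑ i ∈ range n, g (2 * n - i)) := by
  rw [sum_insert (by simp [hn.ne']), ← add_sum_Ioc_eq_sum_Icc (by omega)]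
  congr 2
  refine sum_nbij' (2 * n - ·) (2 * n - ·) ?_ ?_ ?_ ?_ ?_ <;> grind

theorem sum_add_sum_sq_le_of_carlson {q : ℕ → ℝ} {γ x : ℝ} (hx0 : 0 ≤ x) (hx1 : x < 1)
    (hodd : ∀ n, q (2 * n + 1) + ∑ k ∈ range (n + 1), q k ^ 2 ≤ 1)
    (heven : ∀ n, 0 < n → q (2 * n) + ∑ k ∈ range n, q k ^ 2 + γ * q n ^ 2 ≤ 1) (N : ℕ) :
    ∑ k ∈ range (2 * N), q (k + 1) * x ^ (k + 1)
        + (γ + x / (1 - x)) * ∑ k ∈ range N, q (k + 1) ^ 2 * x ^ (2 * (k + 1))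
        + (1 - ∑ k ∈ range (N + 1), q k ^ 2) * (x ^ (2 * N + 1) / (1 - x))
      ≤ (1 - q 0 ^ 2) * (x / (1 - x)) := by
  -- The last summand on the left is the sum of `(1 - ∑ k ∈ range (N + 1), q k ^ 2) * x ^ m` over
  -- `m > 2 * N`, the estimate still available for the remaining terms.
  induction N with
  | zero => simp
  | succ N ih =>
    refine le_trans ?_ ih
    have hodd' := mul_le_mul_of_nonneg_right (hodd N) (pow_nonneg hx0 (2 * N + 1))
    have heven' := mul_le_mul_of_nonneg_right (heven (N + 1) N.succ_pos)
      (pow_nonneg hx0 (2 * N + 2))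
    have hgeom : x ^ (2 * N + 1) / (1 - x) =
        x ^ (2 * N + 1) + x ^ (2 * N + 2) + x / (1 - x) * x ^ (2 * N + 2) := by
      have : 1 - x ≠ 0 := by linarith
      field_simp
      ring
    have hgeom_succ : x ^ (2 * (N + 1) + 1) / (1 - x) = x / (1 - x) * x ^ (2 * N + 2) := by ring
    rw [sum_range_succ _ (N + 1), sum_range_succ _ N, hgeom, hgeom_succ]
    simp only [mul_add 2 N 1, mul_one, sum_range_succ _ (2 * N + 1), sum_range_succ _ (2 * N)]
      at heven' ⊢
    linarith

/-- `a` is the sequence of Taylor coefficients at `0` of a function in the Schur class, that is, of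
an analytic function on the open unit disk bounded by `1` in absolute value. The function is not
named: it is recovered from `a` as the sum of the power series. -/
def IsSchurSequence (a : ℕ → ℂ) : Prop :=
  ∀ z : ℂ, ‖z‖ < 1 → ∃ w, HasSum (fun n => a n * z ^ n) w ∧ ‖w‖ ≤ 1

theorem isSchurSequence_of_hasSum_pow_mul {p : ℕ} (hp : 0 < p) {f : ℂ → ℂ} {a : ℕ → ℂ}
    (hb : ∀ z ∈ Metric.ball (0 : ℂ) 1, ‖f z‖ ≤ 1)
    (hs : ∀ z ∈ Metric.ball (0 : ℂ) 1, HasSum (fun n => a n * z ^ (p * n)) (f z)) :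
    IsSchurSequence a := by
  intro w hw
  obtain ⟨z, rfl⟩ := IsAlgClosed.exists_pow_nat_eq w hp
  have hz : z ∈ Metric.ball (0 : ℂ) 1 := by
    rw [norm_pow, pow_lt_one_iff_of_nonneg (norm_nonneg _) hp.ne'] at hw
    exact mem_ball_zero_iff.mpr hw
  exact ⟨f z, by simpa only [pow_mul] using hs z hz, hb z hz⟩

namespace IsSchurSequence

variable {a : ℕ → ℂ}

theorem cons_zero (ha : IsSchurSequence a) :
    IsSchurSequence fun n => Nat.casesOn n 0 a := by
  intro z hz
  obtain ⟨w, hw, hw1⟩ := ha z hz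
  refine ⟨z * w, ?_, ?_⟩
  · rw [← hasSum_nat_add_iff' 1]
    simpa [pow_succ', mul_left_comm] using hw.mul_left z
  · rw [norm_mul]
    exact mul_le_one₀ hz.le (norm_nonneg w) hw1

theorem sum_sq_norm_toeplitz_dilate_le (ha : IsSchurSequence a) {ρ : ℝ} (hρ0 : 0 ≤ ρ) (hρ1 : ρ < 1)
    (s t : Finset ℕ) (u : ℕ → ℂ) :
    ∑ k ∈ s, ‖∑ j ∈ t with j ≤ k, a (k - j) * ρ ^ (k - j) * u j‖ ^ 2 ≤ ∑ j ∈ t, ‖u j‖ ^ 2 := by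
  have hnorm (z : ℂ) (hz : ‖z‖ = 1) : ‖ρ * z‖ < 1 := by
    simpa [hz, abs_of_nonneg hρ0] using hρ1
  have hsummable : Summable fun n => ‖a n * (ρ : ℂ) ^ n‖ := by
    obtain ⟨w, hw, -⟩ := ha (ρ * 1) (hnorm 1 norm_one)
    simpa only [mul_one] using hw.summable.norm
  have hbound (z : ℂ) (hz : ‖z‖ = 1) : ‖∑' n, a n * (ρ : ℂ) ^ n * z ^ n‖ ≤ 1 := by
    obtain ⟨w, hw, hw1⟩ := ha (ρ * z) (hnorm z hz)
    simp only [mul_pow, ← mul_assoc] at hw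
    rwa [hw.tsum_eq]
  simpa using sum_sq_norm_toeplitz_le_of_unit_circle hsummable hbound s t u

theorem sum_sq_norm_toeplitz_le (ha : IsSchurSequence a) (s t : Finset ℕ) (u : ℕ → ℂ) :
    ∑ k ∈ s, ‖∑ j ∈ t with j ≤ k, a (k - j) * u j‖ ^ 2 ≤ ∑ j ∈ t, ‖u j‖ ^ 2 := by
  let S (ρ : ℝ) : ℝ := ∑ k ∈ s, ‖∑ j ∈ t with j ≤ k, a (k - j) * ρ ^ (k - j) * u j‖ ^ 2
  have hS : Tendsto S (𝓝[<] 1) (𝓝 (S 1)) :=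
    Continuous.continuousWithinAt (by fun_prop)
  have hle : S 1 ≤ ∑ j ∈ t, ‖u j‖ ^ 2 := by
    refine le_of_tendsto hS ?_
    filter_upwards [Ico_mem_nhdsLT one_pos] with ρ hρ
    exact ha.sum_sq_norm_toeplitz_dilate_le hρ.1 hρ.2 s t u
  simpa [S] using hle

theorem sum_sq_norm_le_one (ha : IsSchurSequence a) (s : Finset ℕ) : ∑ k ∈ s, ‖a k‖ ^ 2 ≤ 1 := by
  simpa [filter_singleton] using ha.sum_sq_norm_toeplitz_le s {0} 1

theorem norm_le_one (ha : IsSchurSequence a) (n : ℕ) : ‖a n‖ ≤ 1 := by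
  simpa using ha.sum_sq_norm_le_one {n}

theorem sum_sq_norm_add_le (ha : IsSchurSequence a) {n : ℕ} (hn : 0 < n) (v : ℕ → ℂ) (w : ℂ) :
    ∑ k ∈ range n, ‖a k‖ ^ 2 + ‖a n + a 0 * w‖ ^ 2
        + ‖a (2 * n) + (a n * w + ∑ i ∈ range n, a i * v i)‖ ^ 2
      ≤ 1 + (‖w‖ ^ 2 + ∑ i ∈ range n, ‖v i‖ ^ 2) := by
  -- The test vector is `(1, 0, …, 0, w, v (n-1), …, v 0)`; only rows `0, …, n` and `2n` are kept.
  let u (j : ℕ) : ℂ := if j = 0 then 1 else if j = n then w else v (2 * n - j)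
  have hu0 : u 0 = 1 := if_pos rfl
  have hun : u n = w := by simp [u, hn.ne']
  have hu (i : ℕ) (hi : i ∈ range n) : u (2 * n - i) = v i := by grind
  let t := insert 0 (Icc n (2 * n))
  have hlow (k : ℕ) (hk : k ∈ range n) : ∑ j ∈ t with j ≤ k, a (k - j) * u j = a k := by
    have hfilter : {j ∈ t | j ≤ k} = {0} := by grind
    simp [hfilter, hu0]
  have hmid : ∑ j ∈ t with j ≤ n, a (n - j) * u j = a n + a 0 * w := by
    have hfilter : {j ∈ t | j ≤ n} = {0, n} := by grind
    simp [hfilter, sum_pair hn.ne, hu0, hun]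
  have htop : ∑ j ∈ t with j ≤ 2 * n, a (2 * n - j) * u j =
      a (2 * n) + (a n * w + ∑ i ∈ range n, a i * v i) := by
    have hfilter : {j ∈ t | j ≤ 2 * n} = t := by grind
    rw [hfilter, sum_insert_zero_Icc_two_mul hn, hu0, hun, Nat.sub_zero, mul_one,
      show 2 * n - n = n by omega]
    congr 2
    refine sum_congr rfl fun i hi => ?_
    rw [hu i hi, Nat.sub_sub_self (by grind)]
  have hnorm : ∑ j ∈ t, ‖u j‖ ^ 2 = 1 + (‖w‖ ^ 2 + ∑ i ∈ range n, ‖v i‖ ^ 2) := by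
    rw [sum_insert_zero_Icc_two_mul hn, hu0, hun, norm_one, one_pow]
    congr 2
    exact sum_congr rfl fun i hi => by rw [hu i hi]
  have htoeplitz := ha.sum_sq_norm_toeplitz_le (insert (2 * n) (insert n (range n))) t u
  rw [sum_insert (by grind), sum_insert notMem_range_self, htop, hmid, hnorm,
    sum_congr rfl fun k hk => congrArg (‖·‖ ^ 2) (hlow k hk)] at htoeplitz
  linarith

theorem norm_even_add_sum_sq_le_one (ha : IsSchurSequence a) {n : ℕ} (hn : 0 < n) :
    ‖a (2 * n)‖ + ∑ k ∈ range n, ‖a k‖ ^ 2 + 1 / (1 + ‖a 0‖) * ‖a n‖ ^ 2 ≤ 1 := by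
  obtain ⟨ε, hε, hεa⟩ := Complex.exists_norm_mul_eq_self (a (2 * n))
  -- The weight `γ` satisfies `1 - γ ‖a 0‖ = γ`, so `(γ ‖a n‖)²` appears on both sides and cancels.
  set γ : ℝ := 1 / (1 + ‖a 0‖)
  have hγ0 : 0 ≤ γ := by positivity
  have hγ : γ * (1 + ‖a 0‖) = 1 := one_div_mul_cancel (by positivity)
  set S := ∑ k ∈ range n, ‖a k‖ ^ 2 with hS
  let v (i : ℕ) : ℂ := ε * (starRingEnd ℂ) (a i)
  have hv (i : ℕ) : ‖v i‖ = ‖a i‖ := by simp [v, hε]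
  have hav (i : ℕ) : a i * v i = ε * ‖a i‖ ^ 2 := by
    rw [← Complex.mul_conj']
    ring
  have hw : ‖γ * v n‖ = γ * ‖a n‖ := by rw [norm_mul, Complex.norm_of_nonneg hγ0, hv]
  have hmid : γ * ‖a n‖ ≤ ‖a n + a 0 * (γ * v n)‖ := by
    calc γ * ‖a n‖ = ‖a n‖ - ‖a 0 * (γ * v n)‖ := by
          rw [norm_mul, hw]
          linear_combination ‖a n‖ * hγ
      _ ≤ ‖a n + a 0 * (γ * v n)‖ := norm_sub_le_norm_add _ _
  have htop : a (2 * n) + (a n * (γ * v n) + ∑ i ∈ range n, a i * v i) =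
      ε * ((‖a (2 * n)‖ + S + γ * ‖a n‖ ^ 2 : ℝ) : ℂ) := by
    simp only [hav, ← mul_sum, mul_left_comm (a n)]
    nth_rw 1 [← hεa]
    push_cast [hS]
    ring
  have hbound := ha.sum_sq_norm_add_le hn v (γ * v n)
  simp only [htop, norm_mul ε, hε, one_mul, hw, hv, ← hS] at hbound
  rw [Complex.norm_of_nonneg (by positivity)] at hbound
  have hmid_sq : (γ * ‖a n‖) ^ 2 ≤ ‖a n + a 0 * (γ * v n)‖ ^ 2 := by gcongr
  exact (sq_le_one_iff₀ (by positivity)).mp (by linarith)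

theorem norm_odd_add_sum_sq_le_one (ha : IsSchurSequence a) (n : ℕ) :
    ‖a (2 * n + 1)‖ + ∑ k ∈ range (n + 1), ‖a k‖ ^ 2 ≤ 1 := by
  have h := ha.cons_zero.norm_even_add_sum_sq_le_one n.succ_pos
  rw [sum_range_succ'] at h
  simpa [sum_range_succ, mul_add, add_assoc] using h

theorem summable_norm_mul_pow (ha : IsSchurSequence a) {x : ℝ} (hx0 : 0 ≤ x) (hx1 : x < 1) :
    Summable fun n => ‖a (n + 1)‖ * x ^ (n + 1) := by
  refine .of_nonneg_of_le (fun n => by positivity) (fun n => ?_)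
    ((summable_nat_add_iff 1).mpr (summable_geometric_of_lt_one hx0 hx1))
  exact mul_le_of_le_one_left (by positivity) (ha.norm_le_one _)

theorem summable_norm_sq_mul_pow (ha : IsSchurSequence a) {x : ℝ} (hx0 : 0 ≤ x) (hx1 : x < 1) :
    Summable fun n => ‖a (n + 1)‖ ^ 2 * x ^ (2 * (n + 1)) := by
  refine .of_nonneg_of_le (fun n => by positivity) (fun n => ?_)
    (ha.summable_norm_mul_pow hx0 hx1)
  gcongr ?_ * ?_
  · exact pow_le_of_le_one (norm_nonneg _) (ha.norm_le_one _) two_ne_zero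
  · exact pow_le_pow_of_le_one hx0 hx1.le (by omega)

theorem tsum_norm_add_tsum_norm_sq_le (ha : IsSchurSequence a) {x : ℝ} (hx0 : 0 ≤ x)
    (hx1 : x < 1) :
    (∑' n, ‖a (n + 1)‖ * x ^ (n + 1))
        + (1 / (1 + ‖a 0‖) + x / (1 - x)) * ∑' n, ‖a (n + 1)‖ ^ 2 * x ^ (2 * (n + 1))
      ≤ (1 - ‖a 0‖ ^ 2) * (x / (1 - x)) := by
  have hlim₁ := (ha.summable_norm_mul_pow hx0 hx1).hasSum.tendsto_sum_nat.comp
    (tendsto_id.const_mul_atTop' two_pos)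
  have hlim₂ := (ha.summable_norm_sq_mul_pow hx0 hx1).hasSum.tendsto_sum_nat.const_mul
    (1 / (1 + ‖a 0‖) + x / (1 - x))
  refine le_of_tendsto' (hlim₁.add hlim₂) fun N => ?_
  have hpartial := sum_add_sum_sq_le_of_carlson (q := fun n => ‖a n‖) hx0 hx1
    ha.norm_odd_add_sum_sq_le_one (fun _ => ha.norm_even_add_sum_sq_le_one) N
  have hremainder : 0 ≤ (1 - ∑ k ∈ range (N + 1), ‖a k‖ ^ 2) * (x ^ (2 * N + 1) / (1 - x)) :=
    mul_nonneg (sub_nonneg.mpr (ha.sum_sq_norm_le_one _))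
      (div_nonneg (pow_nonneg hx0 _) (sub_nonneg.mpr hx1.le))
  exact (le_add_of_nonneg_right hremainder).trans hpartial

end IsSchurSequence

theorem pow_le_of_le_rpow_one_div {p : ℕ} (hp : 0 < p) {r y : ℝ} (hr : 0 ≤ r) (hy : 0 ≤ y)
    (hry : r ≤ y ^ ((1 : ℝ) / p)) : r ^ p ≤ y := by
  calc r ^ p ≤ (y ^ ((1 : ℝ) / p)) ^ p := pow_le_pow_left₀ hr hry p
    _ = y := by rw [one_div, Real.rpow_inv_natCast_pow hy hp.ne']

theorem stmt10_general (p : ℕ) (hp : 0 < p) (f : ℂ → ℂ) (a : ℕ → ℂ)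
    (hb : ∀ z ∈ Metric.ball (0 : ℂ) 1, ‖f z‖ ≤ 1)
    (hs : ∀ z ∈ Metric.ball (0 : ℂ) 1, HasSum (fun n => a n * z ^ (p * n)) (f z))
    (r : ℝ) (hr0 : 0 ≤ r) (hr1 : r < 1) :
    (∑' n : ℕ, ‖a (n + 1)‖ * r ^ (p * (n + 1)))
      + (1 / (1 + ‖a 0‖) + r ^ p / (1 - r ^ p))
        * ∑' n : ℕ, ‖a (n + 1)‖ ^ 2 * r ^ (2 * p * (n + 1))
      ≤ (1 - ‖a 0‖ ^ 2) * (r ^ p / (1 - r ^ p)) := by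
  have ha := isSchurSequence_of_hasSum_pow_mul hp hb hs
  simpa only [← pow_mul, mul_left_comm p 2, mul_assoc] using
    ha.tsum_norm_add_tsum_norm_sq_le (pow_nonneg hr0 p) (pow_lt_one₀ hr0 hr1 hp.ne')

/-- Corollary 1(b): let `f(z) = ∑_{n=0}^∞ a_{pn} z^{pn}` be a bounded analytic
self-map of the unit disk (here `a n` denotes the coefficient `a_{pn}`).
Then for `0 ≤ r ≤ (1/2)^{1/p}`:
`|a₀|² + ∑_{n=1}^∞ |a_{pn}| r^{pn}
  + (1/(1+|a₀|) + r^p/(1-r^p)) ∑_{n=1}^∞ |a_{pn}|² r^{2pn} ≤ 1`. -/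
theorem stmt10 (p : ℕ) (hp : 0 < p) (f : ℂ → ℂ) (a : ℕ → ℂ)
    (hf : DifferentiableOn ℂ f (Metric.ball 0 1))
    (hb : ∀ z ∈ Metric.ball (0 : ℂ) 1, ‖f z‖ ≤ 1)
    (hs : ∀ z ∈ Metric.ball (0 : ℂ) 1, HasSum (fun n => a n * z ^ (p * n)) (f z))
    (r : ℝ) (hr0 : 0 ≤ r) (hr : r ≤ (1 / 2 : ℝ) ^ ((1 : ℝ) / p)) :
    ‖a 0‖ ^ 2 + (∑' n : ℕ, ‖a (n + 1)‖ * r ^ (p * (n + 1)))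
      + (1 / (1 + ‖a 0‖) + r ^ p / (1 - r ^ p))
        * ∑' n : ℕ, ‖a (n + 1)‖ ^ 2 * r ^ (2 * p * (n + 1))
      ≤ 1 := by
  have hx : r ^ p ≤ 1 / 2 := pow_le_of_le_rpow_one_div hp hr0 (by norm_num) hr
  have hr1 : r < 1 := (pow_lt_one_iff_of_nonneg hr0 hp.ne').mp (by linarith)
  have hgeneral := stmt10_general p hp f a hb hs r hr0 hr1
  have ha0 : ‖a 0‖ ^ 2 ≤ 1 :=
    pow_le_one₀ (norm_nonneg _) ((isSchurSequence_of_hasSum_pow_mul hp hb hs).norm_le_one 0)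
  have hratio : (1 - ‖a 0‖ ^ 2) * (r ^ p / (1 - r ^ p)) ≤ 1 - ‖a 0‖ ^ 2 :=
    mul_le_of_le_one_right (by linarith) ((div_le_one (by linarith)).mpr (by linarith))
  linarith
end

section
/- Let p be a positive integer and suppose f(z) = ∑_{n=1}^∞ a_{pn} z^{pn} on 𝔻 (so the constant term vanishes). Then for every r with 0 ≤ r^p ≤ 2/(1 + |a_p| + √((1-|a_p|)(5+3|a_p|))): ∑_{n=1}^∞ |a_{pn}| r^{pn} + (1/(1+|a_p|) + r^p/(1-r^p)) · ∑_{n=2}^∞ |a_{pn}|² r^{p(2n-1)} ≤ 1. -/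
/-!
Write `f(z) = w g(w)` with `w = z ^ p`; by the Schwarz lemma `g = ∑ φ_n w ^ n` is again bounded by
`1` on the disk. For a polynomial `P`, the Cauchy estimate on circles and Parseval's identity bound
the coefficients of `g P ^ 2` by the mean of `|P| ^ 2`, that is, by `∑ |P_j| ^ 2`. Taking
`P = 1 + c q` with `c` a unimodular constant, and for `q` the reflection at degree `m` of a
polynomial of degree at most `m / 2` built from the conjugates of the `φ_k`, gives Carlson's
inequalities
`|φ_{2d+1}| + ∑_{k ≤ d} |φ_k| ^ 2 ≤ 1` and
`|φ_{2d+2}| + ∑_{k ≤ d} |φ_k| ^ 2 + |φ_{d+1}| ^ 2 / (1 + |φ_0|) ≤ 1`.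
Weighting them by powers of `x = r ^ p` and summing bounds the left-hand side of the theorem by
`x (A + (1 - A ^ 2) x / (1 - x))` with `A = |φ_0| = |a_p|`, and the condition on `r ^ p` is exactly
what makes this at most `1`.
-/

open Metric Filter Finset
open scoped ComplexConjugate Polynomial PowerSeries Topology

lemma norm_mul_pow_le_circleAverage {E : Type*} [NormedAddCommGroup E] [NormedSpace ℂ E]
    [CompleteSpace E] {f : ℂ → E} {q : FormalMultilinearSeries ℂ ℂ E} {c : ℂ} {R : ENNReal}
    {r : ℝ} (hf : HasFPowerSeriesOnBall f q c R) (hr : 0 < r) (hrR : ENNReal.ofReal r < R)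
    (n : ℕ) : ‖q n‖ * r ^ n ≤ Real.circleAverage (fun z ↦ ‖f z‖) c r := by
  lift r to NNReal using hr.le
  have hsub : closedBall c r ⊆ eball c R := by
    rw [← closedEBall_coe]
    exact fun z hz ↦ lt_of_le_of_lt hz (by simpa using hrR)
  have hq : q = cauchyPowerSeries f c r :=
    hf.hasFPowerSeriesAt.eq_formalMultilinearSeries
      ((hf.differentiableOn.mono hsub).hasFPowerSeriesOnBall hr).hasFPowerSeriesAt
  calc ‖q n‖ * r ^ n
      ≤ Real.circleAverage (fun z ↦ ‖f z‖) c r * |(r : ℝ)|⁻¹ ^ n * r ^ n := by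
        rw [hq]
        gcongr
        exact norm_cauchyPowerSeries_le f c r n
    _ = Real.circleAverage (fun z ↦ ‖f z‖) c r := by
        rw [abs_of_pos hr, mul_assoc, ← mul_pow, inv_mul_cancel₀ hr.ne', one_pow, mul_one]

lemma hasFPowerSeriesOnBall_ofScalars {𝕜 : Type*} [RCLike 𝕜] {c : ℕ → 𝕜} {f : 𝕜 → 𝕜}
    {R : ENNReal} (hR : 0 < R) (hf : ∀ z, ‖z‖ₑ < R → HasSum (fun n ↦ c n * z ^ n) (f z)) :
    HasFPowerSeriesOnBall f (.ofScalars 𝕜 c) 0 R where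
  r_le := by
    refine ENNReal.le_of_forall_nnreal_lt fun r hr ↦ ?_
    apply FormalMultilinearSeries.le_radius_of_summable
    have hsum := (hf (r : ℝ) (by simpa [enorm] using hr)).summable.norm
    simpa using hsum
  r_pos := hR
  hasSum {z} hz := by
    simpa [mul_comm] using hf z (by simpa using hz)

lemma hasSum_coeff_mul {𝕜 : Type*} [RCLike 𝕜] {φ ψ : 𝕜⟦X⟧} {z s t : 𝕜}
    (hφ : HasSum (fun n ↦ φ.coeff n * z ^ n) s)
    (hψ : HasSum (fun n ↦ ψ.coeff n * z ^ n) t) :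
    HasSum (fun n ↦ (φ * ψ).coeff n * z ^ n) (s * t) := by
  have hterm (n : ℕ) : (φ * ψ).coeff n * z ^ n =
      ∑ ij ∈ antidiagonal n, φ.coeff ij.1 * z ^ ij.1 * (ψ.coeff ij.2 * z ^ ij.2) := by
    rw [PowerSeries.coeff_mul, sum_mul]
    refine sum_congr rfl fun ij hij ↦ ?_
    rw [← mem_antidiagonal.1 hij, pow_add]
    ring
  simp_rw [hterm]
  rw [← hφ.tsum_eq, ← hψ.tsum_eq, tsum_mul_tsum_eq_tsum_sum_antidiagonal_of_summable_norm
    hφ.summable.norm hψ.summable.norm]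
  exact (summable_norm_sum_mul_antidiagonal_of_summable_norm
    hφ.summable.norm hψ.summable.norm).of_norm.hasSum

lemma hasSum_coeff_X_mul {R : Type*} [CommRing R] [TopologicalSpace R] [IsTopologicalAddGroup R]
    {φ : R⟦X⟧} {z s : R} :
    HasSum (fun n ↦ (PowerSeries.X * φ).coeff n * z ^ n) s ↔
      HasSum (fun n ↦ φ.coeff n * z ^ (n + 1)) s := by
  rw [← hasSum_nat_add_iff' 1]
  simp [PowerSeries.coeff_succ_X_mul]

lemma hasSum_coeff_coe {R : Type*} [CommSemiring R] [TopologicalSpace R] (P : R[X]) (z : R) :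
    HasSum (fun n ↦ (P : R⟦X⟧).coeff n * z ^ n) (P.eval z) := by
  rw [Polynomial.eval_eq_sum, Polynomial.sum]
  simp_rw [Polynomial.coeff_coe]
  exact hasSum_sum_of_ne_finset_zero fun n hn ↦ by
    rw [Polynomial.notMem_support_iff.1 hn, zero_mul]

lemma circleAverage_norm_sq_eval_le (P : ℂ[X]) {r : ℝ} (hr0 : 0 ≤ r) (hr1 : r ≤ 1) :
    Real.circleAverage (fun z ↦ ‖P.eval z‖ ^ 2) 0 r ≤ ∑ j ∈ P.support, ‖P.coeff j‖ ^ 2 := by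
  set Q : ℂ[X] := P.comp (.C (r : ℂ) * .X) with hQ
  have hQcoeff (j : ℕ) : Q.coeff j = P.coeff j * r ^ j := Polynomial.comp_C_mul_X_coeff
  have hQsupport : Q.support ⊆ P.support := fun j hj ↦ by
    rw [Polynomial.mem_support_iff, hQcoeff] at hj
    exact Polynomial.mem_support_iff.2 (left_ne_zero_of_mul hj)
  calc Real.circleAverage (fun z ↦ ‖P.eval z‖ ^ 2) 0 r
      = ∑ j ∈ Q.support, ‖Q.coeff j‖ ^ 2 := by
        rw [Q.sum_sq_norm_coeff_eq_circleAverage, Real.circleAverage_eq_circleAverage_zero_one]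
        simp [hQ]
    _ ≤ ∑ j ∈ Q.support, ‖P.coeff j‖ ^ 2 := by
        gcongr with j
        rw [hQcoeff, norm_mul, norm_pow, Complex.norm_of_nonneg hr0]
        exact mul_le_of_le_one_right (norm_nonneg _) (pow_le_one₀ hr0 hr1)
    _ ≤ ∑ j ∈ P.support, ‖P.coeff j‖ ^ 2 :=
        sum_le_sum_of_subset_of_nonneg hQsupport fun _ _ _ ↦ sq_nonneg _

lemma coeff_mul_reflect {R : Type*} [CommSemiring R] (φ : R⟦X⟧) {s : R[X]} {m : ℕ}
    (hs : s.natDegree ≤ m) :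
    (φ * (s.reflect m : R[X])).coeff m = s.sum fun i c ↦ φ.coeff i * c := by
  rw [PowerSeries.coeff_mul, s.sum_over_range' (by simp) (m + 1) (Nat.lt_succ_of_le hs),
    Nat.sum_antidiagonal_eq_sum_range_succ fun i j ↦ φ.coeff i * PowerSeries.coeff j _]
  refine sum_congr rfl fun i hi ↦ ?_
  rw [Polynomial.coeff_coe, Polynomial.coeff_reflect, Polynomial.revAt_le (Nat.sub_le m i),
    Nat.sub_sub_self (Nat.lt_succ_iff.1 (mem_range.1 hi))]

lemma coeff_mul_reflect_add {R : Type*} [CommSemiring R] (φ : R⟦X⟧) {s : R[X]} {N : ℕ}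
    (hs : s.natDegree ≤ N) (m : ℕ) :
    (φ * (s.reflect (N + m) : R[X])).coeff m = φ.coeff 0 * s.coeff N := by
  rw [PowerSeries.coeff_mul, sum_eq_single (0, m)]
  · rw [Polynomial.coeff_coe, Polynomial.coeff_reflect, Polynomial.revAt_le (Nat.le_add_left m N),
      Nat.add_sub_cancel]
  · rintro ⟨i, j⟩ hij hne
    rw [HasAntidiagonal.mem_antidiagonal] at hij
    have hi : i ≠ 0 := by rintro rfl; simp_all
    rw [Polynomial.coeff_coe, Polynomial.coeff_reflect, Polynomial.revAt_le (by lia),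
      Polynomial.coeff_eq_zero_of_natDegree_lt (by lia), mul_zero]
  · simp

lemma sum_norm_sq_coeff_reflect {R : Type*} [SeminormedRing R] (s : R[X]) (m : ℕ) :
    ∑ j ∈ (s.reflect m).support, ‖(s.reflect m).coeff j‖ ^ 2 =
      ∑ i ∈ s.support, ‖s.coeff i‖ ^ 2 := by
  rw [Polynomial.reflect_support, sum_image (Polynomial.revAt m).injective.injOn]
  simp only [Polynomial.coeff_reflect, Polynomial.revAt_invol]

lemma sum_norm_sq_coeff_one_add_C_mul_le {𝕜 : Type*} [NormedField 𝕜] {w : 𝕜} (hw : ‖w‖ = 1)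
    {q : 𝕜[X]} (hq : q.coeff 0 = 0) :
    ∑ j ∈ (1 + .C w * q).support, ‖(1 + .C w * q).coeff j‖ ^ 2 ≤
      1 + ∑ j ∈ q.support, ‖q.coeff j‖ ^ 2 := by
  have hcoeff (j : ℕ) (hj : j ≠ 0) : (1 + .C w * q).coeff j = w * q.coeff j := by
    simp [Polynomial.coeff_one, hj]
  have hsupport : (1 + .C w * q).support ⊆ insert 0 q.support := fun j hj ↦ by
    by_contra! hj'
    simp_all
  have hmem : 0 ∉ q.support := by simpa using hq
  refine (sum_le_sum_of_subset_of_nonneg hsupport fun _ _ _ ↦ sq_nonneg _).trans_eq ?_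
  rw [sum_insert hmem]
  congr 1
  · simp [hq]
  · refine sum_congr rfl fun j hj ↦ ?_
    rw [hcoeff j (ne_of_mem_of_not_mem hj hmem), norm_mul, hw, one_mul]

lemma two_mul_re_mul_conj_sub_norm_sq (z : ℂ) :
    2 * (z * conj z).re - ‖conj z‖ ^ 2 = ‖z‖ ^ 2 := by
  rw [Complex.mul_conj', RCLike.norm_conj]
  norm_cast
  ring

/-- The Bohr-type radius bounding `r ^ p`, as a function of `A = |a_p|`: its inverse is the larger
root of `t ^ 2 - (1 + A) * t + (A ^ 2 + A - 1)`. -/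
noncomputable def bohrRadius (A : ℝ) : ℝ := 2 / (1 + A + √((1 - A) * (5 + 3 * A)))

lemma bohrRadius_one : bohrRadius 1 = 1 := by norm_num [bohrRadius]

lemma bohrRadius_lt_one {A : ℝ} (hA0 : 0 ≤ A) (hA1 : A < 1) : bohrRadius A < 1 := by
  have hsqrt : 1 - A < √((1 - A) * (5 + 3 * A)) := Real.lt_sqrt_of_sq_lt (by nlinarith)
  rw [bohrRadius, div_lt_one (by positivity)]
  linarith

lemma mul_add_le_one_of_le_bohrRadius {A x : ℝ} (hA0 : 0 ≤ A) (hA1 : A ≤ 1) (hx0 : 0 ≤ x)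
    (hx1 : x < 1) (hx : x ≤ bohrRadius A) : x * (A + (1 - A ^ 2) * (x / (1 - x))) ≤ 1 := by
  set s := √((1 - A) * (5 + 3 * A))
  have hs0 : 0 ≤ s := Real.sqrt_nonneg _
  have hs2 : s ^ 2 = (1 - A) * (5 + 3 * A) :=
    Real.sq_sqrt (mul_nonneg (by linarith) (by linarith))
  have hfactor : 4 * (1 - x - A * x + (A + A ^ 2 - 1) * x ^ 2) =
      (2 - x * (1 + A + s)) * (2 - x * (1 + A - s)) := by
    linear_combination x ^ 2 * hs2
  have hplus : 0 ≤ 2 - x * (1 + A + s) :=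
    sub_nonneg.2 ((le_div_iff₀ (by positivity)).1 hx)
  have hminus : 0 ≤ 2 - x * (1 + A - s) := by nlinarith [mul_nonneg hx0 hs0]
  have hquadratic := mul_nonneg hplus hminus
  have hx' : 0 < 1 - x := sub_pos.2 hx1
  have hdiv : x * (A + (1 - A ^ 2) * (x / (1 - x))) =
      (x * A * (1 - x) + (1 - A ^ 2) * x ^ 2) / (1 - x) := by
    field_simp
  rw [hdiv, div_le_one hx']
  linarith

/-- The Schur class, in terms of Taylor coefficients at the origin: power series which converge on
the open unit disk to a function bounded by `1`. -/
def IsSchurSeries (φ : ℂ⟦X⟧) : Prop :=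
  ∀ z : ℂ, ‖z‖ < 1 →
    Summable (fun n ↦ φ.coeff n * z ^ n) ∧ ‖∑' n, φ.coeff n * z ^ n‖ ≤ 1

namespace IsSchurSeries

variable {φ : ℂ⟦X⟧}

lemma of_hasSum_comp_pow {p : ℕ} (hp : 0 < p) {f : ℂ → ℂ} (hb : ∀ z ∈ ball (0 : ℂ) 1, ‖f z‖ ≤ 1)
    (hf : ∀ z ∈ ball (0 : ℂ) 1, HasSum (fun n ↦ φ.coeff n * (z ^ p) ^ n) (f z)) :
    IsSchurSeries φ := by
  intro w hw
  obtain ⟨z, rfl⟩ := IsAlgClosed.exists_pow_nat_eq w hp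
  have hz : z ∈ ball (0 : ℂ) 1 := by
    rw [norm_pow, pow_lt_one_iff_of_nonneg (norm_nonneg z) hp.ne'] at hw
    exact mem_ball_zero_iff.2 hw
  exact ⟨(hf z hz).summable, (hf z hz).tsum_eq ▸ hb z hz⟩

lemma of_X_mul (hφ : IsSchurSeries (PowerSeries.X * φ)) : IsSchurSeries φ := by
  set F : ℂ → ℂ := fun w ↦ ∑' n, (PowerSeries.X * φ).coeff n * w ^ n
  have hF (w : ℂ) (hw : ‖w‖ < 1) : HasSum (fun n ↦ (PowerSeries.X * φ).coeff n * w ^ n) (F w) :=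
    (hφ w hw).1.hasSum
  have hseries := hasFPowerSeriesOnBall_ofScalars one_pos fun w hw ↦
    hF w (by simpa [← ofReal_norm] using hw)
  have hF0 : F 0 = 0 := by simpa using (hseries.coeff_zero 0).symm
  have hdiff : DifferentiableOn ℂ F (ball 0 1) := by
    rw [← eball_ofReal, ENNReal.ofReal_one]
    exact hseries.differentiableOn
  have hmaps : Set.MapsTo F (ball 0 1) (closedBall (F 0) 1) := fun w hw ↦ by
    rw [hF0, mem_closedBall_zero_iff]
    exact (hφ w (mem_ball_zero_iff.1 hw)).2
  intro z hz
  have hschwarz : ‖dslope F 0 z‖ ≤ 1 := by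
    simpa using Complex.norm_dslope_le_div_of_mapsTo_ball hdiff hmaps (mem_ball_zero_iff.2 hz)
  suffices h : HasSum (fun n ↦ φ.coeff n * z ^ n) (dslope F 0 z) from
    ⟨h.summable, h.tsum_eq ▸ hschwarz⟩
  rcases eq_or_ne z 0 with rfl | hz0
  · have hderiv : deriv F 0 = φ.coeff 0 := by simpa using hseries.hasFPowerSeriesAt.deriv
    rw [dslope_same, hderiv]
    simpa using hasSum_single (f := fun n ↦ φ.coeff n * 0 ^ n) 0 fun n hn ↦ by simp [hn]
  · rw [dslope_of_ne _ hz0, slope_def_field, hF0, sub_zero, sub_zero]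
    have hshift := (hasSum_coeff_X_mul.1 (hF z hz)).div_const z
    simpa [pow_succ, ← mul_assoc, hz0] using hshift

lemma norm_coeff_mul_sq_le (hφ : IsSchurSeries φ) (P : ℂ[X]) (m : ℕ) :
    ‖(φ * (P : ℂ⟦X⟧) ^ 2).coeff m‖ ≤ ∑ j ∈ P.support, ‖P.coeff j‖ ^ 2 := by
  set f : ℂ → ℂ := fun z ↦ ∑' n, φ.coeff n * z ^ n
  have hseries : HasFPowerSeriesOnBall (fun z ↦ f z * (P ^ 2).eval z)
      (.ofScalars ℂ fun n ↦ (φ * (P : ℂ⟦X⟧) ^ 2).coeff n) 0 1 := by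
    refine hasFPowerSeriesOnBall_ofScalars one_pos fun z hz ↦ ?_
    have hz' : ‖z‖ < 1 := by simpa [← ofReal_norm] using hz
    rw [← Polynomial.coe_pow]
    exact hasSum_coeff_mul (hφ z hz').1.hasSum (hasSum_coeff_coe _ z)
  have hcircle : ∀ r ∈ Set.Ioo (0 : ℝ) 1,
      ‖(φ * (P : ℂ⟦X⟧) ^ 2).coeff m‖ * r ^ m ≤ ∑ j ∈ P.support, ‖P.coeff j‖ ^ 2 := by
    rintro r ⟨hr0, hr1⟩
    have hfint : CircleIntegrable (fun z ↦ ‖f z * (P ^ 2).eval z‖) 0 r := by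
      refine ContinuousOn.circleIntegrable hr0.le (hseries.continuousOn.norm.mono ?_)
      rw [← ENNReal.ofReal_one, eball_ofReal]
      exact sphere_subset_ball hr1
    calc ‖(φ * (P : ℂ⟦X⟧) ^ 2).coeff m‖ * r ^ m
        ≤ Real.circleAverage (fun z ↦ ‖f z * (P ^ 2).eval z‖) 0 r := by
          simpa using norm_mul_pow_le_circleAverage hseries hr0 (by simpa using hr1) m
      _ ≤ Real.circleAverage (fun z ↦ ‖P.eval z‖ ^ 2) 0 r := by
          refine Real.circleAverage_mono hfint ?_ fun z hz ↦ ?_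
          · exact ContinuousOn.circleIntegrable hr0.le (by fun_prop)
          · rw [norm_mul, Polynomial.eval_pow, norm_pow]
            refine mul_le_of_le_one_left (sq_nonneg _) (hφ z ?_).2
            rw [mem_sphere_zero_iff_norm.1 hz, abs_of_pos hr0]
            exact hr1
      _ ≤ ∑ j ∈ P.support, ‖P.coeff j‖ ^ 2 := circleAverage_norm_sq_eval_le P hr0.le hr1.le
  have hlim : Tendsto (fun r : ℝ ↦ ‖(φ * (P : ℂ⟦X⟧) ^ 2).coeff m‖ * r ^ m) (𝓝[<] 1)
      (𝓝 (‖(φ * (P : ℂ⟦X⟧) ^ 2).coeff m‖ * 1 ^ m)) :=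
    (Continuous.tendsto (by fun_prop) 1).mono_left nhdsWithin_le_nhds
  rw [one_pow, mul_one] at hlim
  exact le_of_tendsto hlim (mem_of_superset (Ioo_mem_nhdsLT one_pos) hcircle)

lemma norm_coeff_add_two_mul_re_coeff_mul_le (hφ : IsSchurSeries φ) {q : ℂ[X]}
    (hq : q.coeff 0 = 0) (m : ℕ) :
    ‖φ.coeff m‖ + 2 * ((φ * (q : ℂ⟦X⟧)).coeff m).re ≤
      1 + ∑ j ∈ q.support, ‖q.coeff j‖ ^ 2 + ‖(φ * (q : ℂ⟦X⟧) ^ 2).coeff m‖ := by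
  obtain ⟨w, hw, hwφ⟩ := Complex.exists_norm_mul_eq_self (φ.coeff m)
  set P : ℂ[X] := 1 + .C w * q with hP
  set u : ℂ := (φ * (q : ℂ⟦X⟧)).coeff m
  set v : ℂ := (φ * (q : ℂ⟦X⟧) ^ 2).coeff m
  have hexpand : (φ * (P : ℂ⟦X⟧) ^ 2).coeff m = w * (‖φ.coeff m‖ + 2 * u + w * v) := by
    have hring : φ * (P : ℂ⟦X⟧) ^ 2 = φ + PowerSeries.C (2 * w) * (φ * (q : ℂ⟦X⟧)) +
        PowerSeries.C (w ^ 2) * (φ * (q : ℂ⟦X⟧) ^ 2) := by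
      simp only [hP, Polynomial.coe_add, Polynomial.coe_one, Polynomial.coe_mul, Polynomial.coe_C,
        map_mul, map_pow, map_ofNat]
      ring
    rw [hring, map_add, map_add, PowerSeries.coeff_C_mul, PowerSeries.coeff_C_mul]
    linear_combination -hwφ
  have hre : ‖φ.coeff m‖ + 2 * u.re ≤ ‖(‖φ.coeff m‖ + 2 * u + w * v : ℂ)‖ + ‖v‖ := by
    calc ‖φ.coeff m‖ + 2 * u.re = (‖φ.coeff m‖ + 2 * u : ℂ).re := by simp
      _ ≤ ‖(‖φ.coeff m‖ + 2 * u + w * v - w * v : ℂ)‖ := by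
        rw [add_sub_cancel_right]
        exact Complex.re_le_norm _
      _ ≤ ‖(‖φ.coeff m‖ + 2 * u + w * v : ℂ)‖ + ‖w * v‖ := norm_sub_le _ _
      _ = ‖(‖φ.coeff m‖ + 2 * u + w * v : ℂ)‖ + ‖v‖ := by rw [norm_mul, hw, one_mul]
  have hbound := hφ.norm_coeff_mul_sq_le P m
  rw [hexpand, norm_mul, hw, one_mul] at hbound
  have hPsum := sum_norm_sq_coeff_one_add_C_mul_le hw hq
  linarith

lemma norm_coeff_add_sum_le (hφ : IsSchurSeries φ) {s : ℂ[X]} {m : ℕ} (hm : 0 < m)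
    (hs : 2 * s.natDegree ≤ m) :
    ‖φ.coeff m‖ + s.sum (fun i c ↦ 2 * (φ.coeff i * c).re - ‖c‖ ^ 2) ≤
      1 + ‖φ.coeff 0‖ * ‖(s ^ 2).coeff m‖ := by
  have hreflect_zero : (s.reflect m).coeff 0 = 0 := by
    rw [Polynomial.coeff_reflect, Polynomial.revAt_zero]
    exact Polynomial.coeff_eq_zero_of_natDegree_lt (by lia)
  have hsq : (s.reflect m) ^ 2 = (s ^ 2).reflect (m + m) := by
    rw [sq, sq, Polynomial.reflect_mul s s (by lia) (by lia)]
  have hlandau := hφ.norm_coeff_add_two_mul_re_coeff_mul_le hreflect_zero m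
  rw [coeff_mul_reflect φ (by lia), sum_norm_sq_coeff_reflect, ← Polynomial.coe_pow, hsq,
    coeff_mul_reflect_add φ (Polynomial.natDegree_pow_le.trans hs), norm_mul] at hlandau
  simp only [Polynomial.sum, Complex.re_sum, sum_sub_distrib, ← mul_sum] at hlandau ⊢
  linarith

lemma norm_coeff_odd_add_sum_sq_le (hφ : IsSchurSeries φ) (d : ℕ) :
    ‖φ.coeff (2 * d + 1)‖ + ∑ k ∈ range (d + 1), ‖φ.coeff k‖ ^ 2 ≤ 1 := by
  set s : ℂ[X] := PowerSeries.trunc (d + 1) (PowerSeries.mk fun k ↦ conj (φ.coeff k)) with hs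
  have hdeg : s.natDegree < d + 1 := PowerSeries.natDegree_trunc_lt _ d
  have hsq : (s ^ 2).coeff (2 * d + 1) = 0 :=
    Polynomial.coeff_eq_zero_of_natDegree_lt (Polynomial.natDegree_pow_le.trans_lt (by lia))
  have hbound := hφ.norm_coeff_add_sum_le (s := s) (Nat.succ_pos (2 * d)) (by lia)
  rw [s.sum_over_range' (by simp) _ hdeg, hsq, norm_zero, mul_zero, add_zero] at hbound
  convert hbound using 3 with k hk
  rw [hs, PowerSeries.coeff_trunc, if_pos (mem_range.1 hk), PowerSeries.coeff_mk,
    two_mul_re_mul_conj_sub_norm_sq]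

lemma norm_coeff_even_add_sum_sq_le (hφ : IsSchurSeries φ) (d : ℕ) :
    ‖φ.coeff (2 * d + 2)‖ + ∑ k ∈ range (d + 1), ‖φ.coeff k‖ ^ 2 +
      ‖φ.coeff (d + 1)‖ ^ 2 / (1 + ‖φ.coeff 0‖) ≤ 1 := by
  set A : ℝ := ‖φ.coeff 0‖
  set b : ℂ := φ.coeff (d + 1)
  have hA : 0 < 1 + A := by positivity
  -- This `c` maximizes `2 * re (b * c) - ‖c‖ ^ 2 - A * ‖c‖ ^ 2`.
  set c : ℂ := conj b / (1 + A : ℝ) with hc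
  set s : ℂ[X] := PowerSeries.trunc (d + 2)
    (PowerSeries.mk (Function.update (fun k ↦ conj (φ.coeff k)) (d + 1) c)) with hs
  have hcoeff (k : ℕ) (hk : k < d + 1) : s.coeff k = conj (φ.coeff k) := by
    simp [hs, PowerSeries.coeff_trunc, hk.ne, hk.trans (Nat.lt_succ_self _)]
  have hcoeff_last : s.coeff (d + 1) = c := by simp [hs, PowerSeries.coeff_trunc]
  have hdeg : s.natDegree < d + 2 := PowerSeries.natDegree_trunc_lt _ _
  have hsq : (s ^ 2).coeff (2 * d + 2) = c ^ 2 :=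
    hcoeff_last ▸ Polynomial.coeff_pow_of_natDegree_le (Nat.lt_succ_iff.1 hdeg)
  have hbound := hφ.norm_coeff_add_sum_le (s := s) (Nat.succ_pos (2 * d + 1)) (by lia)
  rw [s.sum_over_range' (by simp) _ hdeg, sum_range_succ, hsq, hcoeff_last,
    sum_congr rfl fun k hk ↦ by
      rw [hcoeff k (mem_range.1 hk), two_mul_re_mul_conj_sub_norm_sq]] at hbound
  have hre : (b * c).re = ‖b‖ ^ 2 / (1 + A) := by
    rw [hc, ← mul_div_assoc, Complex.mul_conj']
    norm_cast
  have hnorm : ‖c‖ = ‖b‖ / (1 + A) := by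
    rw [hc, norm_div, RCLike.norm_conj, Complex.norm_of_nonneg hA.le]
  have hgain : 2 * (b * c).re - ‖c‖ ^ 2 - A * ‖c ^ 2‖ = ‖b‖ ^ 2 / (1 + A) := by
    rw [hre, norm_pow, hnorm]
    field_simp
    ring
  linarith

lemma sum_norm_sq_coeff_le_one (hφ : IsSchurSeries φ) (d : ℕ) :
    ∑ k ∈ range (d + 1), ‖φ.coeff k‖ ^ 2 ≤ 1 :=
  (le_add_of_nonneg_left (norm_nonneg _)).trans (hφ.norm_coeff_odd_add_sum_sq_le d)

lemma norm_coeff_le_one (hφ : IsSchurSeries φ) (n : ℕ) : ‖φ.coeff n‖ ≤ 1 := by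
  have hsq : ‖φ.coeff n‖ ^ 2 ≤ 1 :=
    (single_le_sum (f := fun k ↦ ‖φ.coeff k‖ ^ 2) (fun _ _ ↦ sq_nonneg _)
      (self_mem_range_succ n)).trans (hφ.sum_norm_sq_coeff_le_one n)
  exact (sq_le_one_iff₀ (norm_nonneg _)).1 hsq

lemma coeff_succ_eq_zero (hφ : IsSchurSeries φ) (h0 : ‖φ.coeff 0‖ = 1) (n : ℕ) :
    φ.coeff (n + 1) = 0 := by
  have hsum := hφ.sum_norm_sq_coeff_le_one (n + 1)
  rw [sum_range_succ', h0, one_pow, add_le_iff_nonpos_left] at hsum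
  have hzero := (sum_eq_zero_iff_of_nonneg fun _ _ ↦ sq_nonneg _).1
    (hsum.antisymm (sum_nonneg fun _ _ ↦ sq_nonneg _)) n (self_mem_range_succ n)
  simpa using hzero

lemma summable_norm_coeff_mul_pow (hφ : IsSchurSeries φ) {x : ℝ} (hx0 : 0 ≤ x) (hx1 : x < 1) :
    Summable fun n ↦ ‖φ.coeff n‖ * x ^ n := by
  simpa [abs_of_nonneg hx0] using (hφ x (by simpa [abs_of_nonneg hx0])).1.norm

lemma summable_norm_sq_coeff_mul_pow (hφ : IsSchurSeries φ) {x : ℝ} (hx0 : 0 ≤ x) (hx1 : x < 1) :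
    Summable fun n ↦ ‖φ.coeff n‖ ^ 2 * x ^ (2 * n) := by
  refine (hφ.summable_norm_coeff_mul_pow hx0 hx1).of_nonneg_of_le (fun n ↦ by positivity) fun n ↦ ?_
  rw [mul_comm 2 n, pow_mul, ← mul_pow]
  exact pow_le_of_le_one (by positivity)
    (mul_le_one₀ (hφ.norm_coeff_le_one n) (by positivity) (pow_le_one₀ hx0 hx1.le)) two_ne_zero

lemma sum_norm_coeff_mul_pow_add_le (hφ : IsSchurSeries φ) {x : ℝ} (hx0 : 0 ≤ x) (hx1 : x < 1)
    (M : ℕ) :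
    ∑ k ∈ range (2 * M + 1), ‖φ.coeff k‖ * x ^ k + (1 / (1 + ‖φ.coeff 0‖) + x / (1 - x)) *
        ∑ n ∈ range M, ‖φ.coeff (n + 1)‖ ^ 2 * x ^ (2 * (n + 1)) ≤
      ‖φ.coeff 0‖ + (1 - ‖φ.coeff 0‖ ^ 2) * (x / (1 - x)) -
        x ^ (2 * M + 1) / (1 - x) * (1 - ∑ k ∈ range (M + 1), ‖φ.coeff k‖ ^ 2) := by
  have hx : 1 - x ≠ 0 := (sub_pos.2 hx1).ne'
  induction M with
  | zero =>
    simp only [mul_zero, zero_add, range_one, range_zero, sum_singleton, sum_empty, pow_zero,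
      pow_one, mul_one, add_zero]
    exact le_of_eq (by ring)
  | succ M ih =>
    set A := ‖φ.coeff 0‖
    set S := ∑ k ∈ range (M + 1), ‖φ.coeff k‖ ^ 2
    set b := ‖φ.coeff (M + 1)‖ ^ 2
    have hodd : ‖φ.coeff (2 * M + 1)‖ * x ^ (2 * M + 1) ≤ (1 - S) * x ^ (2 * M + 1) := by
      gcongr
      exact le_sub_iff_add_le.2 (hφ.norm_coeff_odd_add_sum_sq_le M)
    have heven : ‖φ.coeff (2 * M + 2)‖ * x ^ (2 * M + 2) ≤
        (1 - S - b / (1 + A)) * x ^ (2 * M + 2) := by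
      gcongr
      linarith [hφ.norm_coeff_even_add_sum_sq_le M]
    have hstep : (1 - S) * x ^ (2 * M + 1) + (1 - S - b / (1 + A)) * x ^ (2 * M + 2) +
        (1 / (1 + A) + x / (1 - x)) * (b * x ^ (2 * M + 2)) -
          x ^ (2 * M + 1) / (1 - x) * (1 - S) =
        -(x ^ (2 * M + 3) / (1 - x) * (1 - (S + b))) := by
      field_simp
      ring
    rw [show 2 * (M + 1) + 1 = 2 * M + 3 by ring, sum_range_succ _ (2 * M + 2),
      sum_range_succ _ (2 * M + 1), sum_range_succ _ M, sum_range_succ _ (M + 1),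
      show 2 * (M + 1) = 2 * M + 2 by ring]
    linarith

lemma tsum_norm_coeff_mul_pow_add_le (hφ : IsSchurSeries φ) {x : ℝ} (hx0 : 0 ≤ x) (hx1 : x < 1) :
    ∑' n, ‖φ.coeff n‖ * x ^ n + (1 / (1 + ‖φ.coeff 0‖) + x / (1 - x)) *
        ∑' n, ‖φ.coeff (n + 1)‖ ^ 2 * x ^ (2 * (n + 1)) ≤
      ‖φ.coeff 0‖ + (1 - ‖φ.coeff 0‖ ^ 2) * (x / (1 - x)) := by
  have hlin := (hφ.summable_norm_coeff_mul_pow hx0 hx1).hasSum.tendsto_sum_nat.comp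
    (tendsto_atTop_mono (fun M ↦ (by lia : M ≤ 2 * M + 1)) tendsto_id)
  have hsq := ((summable_nat_add_iff 1).2
    (hφ.summable_norm_sq_coeff_mul_pow hx0 hx1)).hasSum.tendsto_sum_nat
  refine le_of_tendsto' (hlin.add (hsq.const_mul _)) fun M ↦
    (hφ.sum_norm_coeff_mul_pow_add_le hx0 hx1 M).trans (sub_le_self _ ?_)
  exact mul_nonneg (div_nonneg (pow_nonneg hx0 _) (sub_nonneg.2 hx1.le))
    (sub_nonneg.2 (hφ.sum_norm_sq_coeff_le_one M))

lemma mul_tsum_norm_coeff_mul_pow_add_le_one (hφ : IsSchurSeries φ) {x : ℝ} (hx0 : 0 ≤ x)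
    (hx : x ≤ bohrRadius ‖φ.coeff 0‖) :
    x * (∑' n, ‖φ.coeff n‖ * x ^ n + (1 / (1 + ‖φ.coeff 0‖) + x / (1 - x)) *
      ∑' n, ‖φ.coeff (n + 1)‖ ^ 2 * x ^ (2 * (n + 1))) ≤ 1 := by
  rcases (hφ.norm_coeff_le_one 0).eq_or_lt with h1 | hlt
  · rw [h1, bohrRadius_one] at hx
    have hzero := hφ.coeff_succ_eq_zero h1
    rw [tsum_eq_single 0 fun n hn ↦ by
      rw [← Nat.succ_pred_eq_of_ne_zero hn, Nat.succ_eq_add_one, hzero, norm_zero, zero_mul]]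
    simpa [hzero, h1, -PowerSeries.coeff_zero_eq_constantCoeff] using hx
  · have hx1 := hx.trans_lt (bohrRadius_lt_one (norm_nonneg _) hlt)
    exact (mul_le_mul_of_nonneg_left (hφ.tsum_norm_coeff_mul_pow_add_le hx0 hx1) hx0).trans
      (mul_add_le_one_of_le_bohrRadius (norm_nonneg _) hlt.le hx0 hx1 hx)

end IsSchurSeries

/-- Corollary 2(A): let `f(z) = ∑_{n=1}^∞ a_{pn} z^{pn}` be a bounded analytic
self-map of the unit disk with vanishing constant term (here `a n` denotes the
coefficient `a_{pn}`, so `a 1` is `a_p`). Then for `0 ≤ r` with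
`r^p ≤ 2/(1 + |a_p| + √((1-|a_p|)(5+3|a_p|)))`:
`∑_{n=1}^∞ |a_{pn}| r^{pn}
  + (1/(1+|a_p|) + r^p/(1-r^p)) ∑_{n=2}^∞ |a_{pn}|² r^{p(2n-1)} ≤ 1`. -/
theorem stmt11 (p : ℕ) (hp : 0 < p) (f : ℂ → ℂ) (a : ℕ → ℂ)
    (hf : DifferentiableOn ℂ f (Metric.ball 0 1))
    (hb : ∀ z ∈ Metric.ball (0 : ℂ) 1, ‖f z‖ ≤ 1)
    (hs : ∀ z ∈ Metric.ball (0 : ℂ) 1, HasSum (fun n => a (n + 1) * z ^ (p * (n + 1))) (f z))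
    (r : ℝ) (hr0 : 0 ≤ r)
    (hr : r ^ p ≤ 2 / (1 + ‖a 1‖ + Real.sqrt ((1 - ‖a 1‖) * (5 + 3 * ‖a 1‖)))) :
    (∑' n : ℕ, ‖a (n + 1)‖ * r ^ (p * (n + 1)))
      + (1 / (1 + ‖a 1‖) + r ^ p / (1 - r ^ p))
        * ∑' n : ℕ, ‖a (n + 2)‖ ^ 2 * r ^ (p * (2 * (n + 2) - 1))
      ≤ 1 := by
  set φ : ℂ⟦X⟧ := PowerSeries.mk fun n ↦ a (n + 1)
  have hcoeff (n : ℕ) : a (n + 1) = φ.coeff n := by rw [PowerSeries.coeff_mk]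
  have hφ : IsSchurSeries φ := by
    refine (IsSchurSeries.of_hasSum_comp_pow hp hb fun z hz ↦ hasSum_coeff_X_mul.2 ?_).of_X_mul
    simpa only [hcoeff, pow_mul] using hs z hz
  have hlin (n : ℕ) : ‖a (n + 1)‖ * r ^ (p * (n + 1)) = r ^ p * (‖φ.coeff n‖ * (r ^ p) ^ n) := by
    rw [hcoeff, pow_mul, pow_succ]
    ring
  have hsq (n : ℕ) : ‖a (n + 2)‖ ^ 2 * r ^ (p * (2 * (n + 2) - 1)) =
      r ^ p * (‖φ.coeff (n + 1)‖ ^ 2 * (r ^ p) ^ (2 * (n + 1))) := by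
    rw [hcoeff, show 2 * (n + 2) - 1 = 2 * (n + 1) + 1 by lia, pow_mul, pow_succ]
    ring
  simp_rw [hlin, hsq, tsum_mul_left, hcoeff 0, mul_left_comm _ (r ^ p), ← mul_add]
  exact hφ.mul_tsum_norm_coeff_mul_pow_add_le_one (pow_nonneg hr0 p) (hcoeff 0 ▸ hr)
end
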